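/- Let H be a complex Hilbert space with dim H ≥ 3 and let φ : B_s(H) → B_s(H) be a surjective map such that for all A, B, C ∈ B_s(H), A − B ↔_q C if and only if φ(A) − φ(B) ↔_q φ(C). Then there exist a nonzero real scalar c, an operator U on H that is either unitary or antiunitary, and a function f : B_s(H) → ℝ such that φ(A) = c·U A U* + f(A)·I for all A ∈ B_s(H); moreover f(A) = 0 for every A ∈ B_s(H) for which there exists a nonzero B ∈ B_s(H) not commuting with A such that AB + BA = 0. -/

import Mathlib

noncomputable section

variable {H : Type*} [NormedAddCommGroup H] [InnerProductSpace ℂ H] [CompleteSpace H]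

/-- `A ↔_c B`: the self-adjoint operators `A` and `B` commute. -/
def CommC (A B : selfAdjoint (H →L[ℂ] H)) : Prop :=
  (A : H →L[ℂ] H) * (B : H →L[ℂ] H) = (B : H →L[ℂ] H) * (A : H →L[ℂ] H)

/-- `A ↔_q B`: the self-adjoint operators `A` and `B` quasi-commute, i.e.
they either commute or anti-commute. -/
def CommQ (A B : selfAdjoint (H →L[ℂ] H)) : Prop :=
  (A : H →L[ℂ] H) * (B : H →L[ℂ] H) = (B : H →L[ℂ] H) * (A : H →L[ℂ] H) ∨
  (A : H →L[ℂ] H) * (B : H →L[ℂ] H) + (B : H →L[ℂ] H) * (A : H →L[ℂ] H) = 0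

set_option linter.unusedSectionVars false

section Shortcuts

instance : AddCommGroup (selfAdjoint (H →L[ℂ] H)) := inferInstance
instance : AddCommMonoid (selfAdjoint (H →L[ℂ] H)) := inferInstance
instance : AddZeroClass (selfAdjoint (H →L[ℂ] H)) := inferInstance
instance : SMul ℝ (selfAdjoint (H →L[ℂ] H)) := inferInstance
instance : Module ℝ (selfAdjoint (H →L[ℂ] H)) := inferInstance
instance : MulAction ℝ (selfAdjoint (H →L[ℂ] H)) := inferInstance
instance : SMulWithZero ℝ (selfAdjoint (H →L[ℂ] H)) := inferInstance
instance : DistribMulAction ℝ (selfAdjoint (H →L[ℂ] H)) := Module.toDistribMulAction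
instance : DistribSMul ℝ (selfAdjoint (H →L[ℂ] H)) := DistribMulAction.toDistribSMul
instance : SMulZeroClass ℝ (selfAdjoint (H →L[ℂ] H)) := DistribSMul.toSMulZeroClass

end Shortcuts

open InnerProductSpace in
/-- The self-adjoint operator `z ↦ ⟪x, z⟫ • x`. -/
def rk (x : H) : selfAdjoint (H →L[ℂ] H) :=
  ⟨rankOne ℂ x x, by
    rw [selfAdjoint.mem_iff, ContinuousLinearMap.star_eq_adjoint, adjoint_rankOne]⟩

local notation "⟪" x "," y "⟫" => inner ℂ x y

theorem rk_apply (x z : H) : (rk x : H →L[ℂ] H) z = ⟪x, z⟫ • x := rfl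

theorem smul_val_apply (t : ℝ) (A : selfAdjoint (H →L[ℂ] H)) (x : H) :
    ((t • A : selfAdjoint (H →L[ℂ] H)) : H →L[ℂ] H) x = (t : ℂ) • (A : H →L[ℂ] H) x := by
  rw [selfAdjoint.val_smul, smul_apply, Complex.coe_smul]

theorem one_val_apply (x : H) : ((1 : selfAdjoint (H →L[ℂ] H)) : H →L[ℂ] H) x = x := rfl

theorem add_val_apply (A B : selfAdjoint (H →L[ℂ] H)) (x : H) :
    ((A + B : selfAdjoint (H →L[ℂ] H)) : H →L[ℂ] H) x
      = (A : H →L[ℂ] H) x + (B : H →L[ℂ] H) x := rfl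

theorem sub_val_apply (A B : selfAdjoint (H →L[ℂ] H)) (x : H) :
    ((A - B : selfAdjoint (H →L[ℂ] H)) : H →L[ℂ] H) x
      = (A : H →L[ℂ] H) x - (B : H →L[ℂ] H) x := rfl

theorem zero_val_apply (x : H) : ((0 : selfAdjoint (H →L[ℂ] H)) : H →L[ℂ] H) x = 0 := rfl

theorem inner_val_apply (A : selfAdjoint (H →L[ℂ] H)) (x y : H) :
    ⟪(A : H →L[ℂ] H) x, y⟫ = ⟪x, (A : H →L[ℂ] H) y⟫ := by
  rw [← ContinuousLinearMap.adjoint_inner_right, ← ContinuousLinearMap.star_eq_adjoint,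
    selfAdjoint.star_val_eq]

theorem sa_ext {A B : selfAdjoint (H →L[ℂ] H)}
    (h : ∀ x, (A : H →L[ℂ] H) x = (B : H →L[ℂ] H) x) : A = B :=
  Subtype.ext (ContinuousLinearMap.ext h)

theorem commC_iff {A B : selfAdjoint (H →L[ℂ] H)} :
    CommC A B ↔ ∀ x, (A : H →L[ℂ] H) ((B : H →L[ℂ] H) x)
      = (B : H →L[ℂ] H) ((A : H →L[ℂ] H) x) :=
  ContinuousLinearMap.ext_iff

theorem CommC.symm {A B : selfAdjoint (H →L[ℂ] H)} (h : CommC A B) : CommC B A :=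
  Eq.symm h

theorem commC_comm {A B : selfAdjoint (H →L[ℂ] H)} : CommC A B ↔ CommC B A :=
  ⟨.symm, .symm⟩

/-- `x` is zero or an eigenvector of `A`. -/
def Eig (A : selfAdjoint (H →L[ℂ] H)) (x : H) : Prop :=
  ∃ l : ℂ, (A : H →L[ℂ] H) x = l • x

theorem Eig.real {A : selfAdjoint (H →L[ℂ] H)} {x : H} (h : Eig A x) :
    ∃ l : ℝ, (A : H →L[ℂ] H) x = (l : ℂ) • x := by
  obtain ⟨l, hl⟩ := h
  by_cases hx : x = 0
  · exact ⟨0, by simp [hx]⟩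
  refine ⟨l.re, ?_⟩
  have h1 := inner_val_apply A x x
  rw [hl, inner_smul_left, inner_smul_right] at h1
  have h2 := mul_right_cancel₀ (inner_self_ne_zero.2 hx) h1
  rw [Complex.conj_eq_iff_re.1 h2, hl]

theorem commC_rk_iff {A : selfAdjoint (H →L[ℂ] H)} {x : H} : CommC A (rk x) ↔ Eig A x := by
  rw [commC_iff]
  constructor
  · intro h
    by_cases hx : x = 0
    · exact ⟨0, by simp [hx]⟩
    have h1 := h x
    rw [rk_apply, rk_apply, map_smul] at h1
    refine ⟨⟪x, x⟫⁻¹ * ⟪x, (A : H →L[ℂ] H) x⟫, ?_⟩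
    rw [mul_smul, ← h1, inv_smul_smul₀ (inner_self_ne_zero.2 hx)]
  · intro h z
    obtain ⟨l, hl⟩ := h.real
    rw [rk_apply, rk_apply, map_smul, ← inner_val_apply, hl, inner_smul_left, Complex.conj_ofReal,
      smul_smul, mul_comm]

theorem exists_real_smul_of_eig {A : selfAdjoint (H →L[ℂ] H)} (W : Submodule ℂ H)
    (h : ∀ w ∈ W, Eig A w) : ∃ r : ℝ, ∀ w ∈ W, (A : H →L[ℂ] H) w = (r : ℂ) • w := by
  by_cases hW : ∃ w ∈ W, w ≠ 0
  · obtain ⟨u, hu, hu0⟩ := hW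
    obtain ⟨r, hr⟩ := (h u hu).real
    refine ⟨r, fun v hv => ?_⟩
    obtain ⟨l, hl⟩ := h v hv
    obtain ⟨m, hm⟩ := h (u + v) (W.add_mem hu hv)
    rw [map_add, hr, hl, smul_add] at hm
    have e : ((r : ℂ) - m) • u = (m - l) • v := by
      rw [sub_smul, sub_smul, sub_eq_sub_iff_add_eq_add, hm, add_comm]
    by_cases hml : m = l
    · subst hml
      rw [sub_self, zero_smul] at e
      rw [hl, ← sub_eq_zero.1 ((smul_eq_zero.1 e).resolve_right hu0)]
    · have : v = ((m - l)⁻¹ * (r - m)) • u := by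
        rw [mul_smul, e, inv_smul_smul₀ (sub_ne_zero.2 hml)]
      rw [this, map_smul, hr, smul_comm]
  · push Not at hW
    exact ⟨0, fun w hw => by simp [hW w hw]⟩

/-- `A` and `B` differ by a real multiple of the identity. -/
def ScalarEq (A B : selfAdjoint (H →L[ℂ] H)) : Prop := ∃ k : ℝ, A = B + k • 1

theorem ScalarEq.refl (A : selfAdjoint (H →L[ℂ] H)) : ScalarEq A A := ⟨0, by simp⟩

theorem ScalarEq.symm {A B : selfAdjoint (H →L[ℂ] H)} (h : ScalarEq A B) : ScalarEq B A := by
  obtain ⟨k, rfl⟩ := h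
  exact ⟨-k, by module⟩

theorem ScalarEq.trans {A B C : selfAdjoint (H →L[ℂ] H)} (h : ScalarEq A B)
    (h' : ScalarEq B C) : ScalarEq A C := by
  obtain ⟨k, rfl⟩ := h
  obtain ⟨l, rfl⟩ := h'
  exact ⟨l + k, by module⟩

theorem ScalarEq.sub {A B C D : selfAdjoint (H →L[ℂ] H)} (h : ScalarEq A B)
    (h' : ScalarEq C D) : ScalarEq (A - C) (B - D) := by
  obtain ⟨k, rfl⟩ := h
  obtain ⟨l, rfl⟩ := h'
  exact ⟨k - l, by module⟩

theorem scalarEq_zero_of_eig {A : selfAdjoint (H →L[ℂ] H)} (h : ∀ x, Eig A x) :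
    ScalarEq A 0 := by
  obtain ⟨r, hr⟩ := exists_real_smul_of_eig ⊤ fun w _ => h w
  exact ⟨r, sa_ext fun x => by
    rw [hr x trivial, zero_add, smul_val_apply, one_val_apply]⟩

theorem scalarEq_iff_sub {A B : selfAdjoint (H →L[ℂ] H)} :
    ScalarEq A B ↔ ScalarEq (A - B) 0 := by
  constructor
  · rintro ⟨k, rfl⟩; exact ⟨k, by module⟩
  · rintro ⟨k, h⟩; exact ⟨k, by rw [sub_eq_iff_eq_add] at h; rw [h]; module⟩

theorem CommC.congr_left {A B C : selfAdjoint (H →L[ℂ] H)} (h : CommC A C) (h' : ScalarEq A B) :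
    CommC B C := by
  obtain ⟨k, rfl⟩ := h'
  rw [commC_iff] at h ⊢
  intro x
  have := h x
  simp only [add_val_apply, smul_val_apply, one_val_apply, map_add, map_smul] at this
  exact add_right_cancel this

theorem commC_congr_left {A B C : selfAdjoint (H →L[ℂ] H)} (h' : ScalarEq A B) :
    CommC A C ↔ CommC B C := ⟨fun h => h.congr_left h', fun h => h.congr_left h'.symm⟩

theorem CommC.add_left {A B C : selfAdjoint (H →L[ℂ] H)} (h : CommC A C) (h' : CommC B C) :
    CommC (A + B) C := by
  rw [commC_iff] at *
  intro x
  simp only [add_val_apply, map_add, h x, h' x]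

theorem CommC.smul_left {A C : selfAdjoint (H →L[ℂ] H)} (t : ℝ) (h : CommC A C) :
    CommC (t • A) C := by
  rw [commC_iff] at *
  intro x
  simp only [smul_val_apply, map_smul, h x]

theorem commC_smul_iff {A C : selfAdjoint (H →L[ℂ] H)} {t : ℝ} (ht : t ≠ 0) :
    CommC (t • A) C ↔ CommC A C :=
  ⟨fun h => by simpa [smul_smul, ht] using h.smul_left t⁻¹, fun h => h.smul_left t⟩

theorem ScalarEq.commC {A : selfAdjoint (H →L[ℂ] H)} (h : ScalarEq A 0)
    (C : selfAdjoint (H →L[ℂ] H)) : CommC A C :=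
  CommC.congr_left (commC_iff.2 fun x => by simp) h.symm

theorem Eig.congr {A B : selfAdjoint (H →L[ℂ] H)} {x : H} (h : Eig A x) (h' : ScalarEq A B) :
    Eig B x := commC_rk_iff.1 ((commC_rk_iff.2 h).congr_left h')

theorem scalarEq_zero_iff_commQ {A : selfAdjoint (H →L[ℂ] H)} :
    ScalarEq A 0 ↔ ∀ C, CommQ A C := by
  refine ⟨fun h C => Or.inl (h.commC C), fun h => scalarEq_zero_of_eig fun x => ?_⟩
  rcases h (rk x) with h | h
  · exact commC_rk_iff.1 h
  · by_cases hx : x = 0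
    · exact ⟨0, by simp [hx]⟩
    have h1 : ⟪x, x⟫ • (A : H →L[ℂ] H) x + ⟪x, (A : H →L[ℂ] H) x⟫ • x = 0 := by
      simpa [rk_apply] using congrArg (fun T : H →L[ℂ] H => T x) h
    refine ⟨⟪x, x⟫⁻¹ * -⟪x, (A : H →L[ℂ] H) x⟫, ?_⟩
    rw [mul_smul, neg_smul, ← eq_neg_of_add_eq_zero_left h1,
      inv_smul_smul₀ (inner_self_ne_zero.2 hx)]

theorem commC_iff_commQ {A C : selfAdjoint (H →L[ℂ] H)} :
    CommC A C ↔ ∀ k : ℝ, CommQ (A + k • 1) C := by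
  constructor
  · exact fun h k => Or.inl (h.congr_left (ScalarEq.symm ⟨k, rfl⟩))
  · intro h
    rcases h 0 with h0 | h0
    · exact CommC.congr_left h0 ⟨0, by simp⟩
    rcases h 1 with h1 | h1
    · exact CommC.congr_left h1 ⟨1, rfl⟩
    have : C = 0 := sa_ext fun x => by
      have e0 := congrArg (fun T : H →L[ℂ] H => T x) h0
      have e1 := congrArg (fun T : H →L[ℂ] H => T x) h1
      simp at e0 e1
      rw [zero_val_apply]
      have : (2 : ℂ) • (C : H →L[ℂ] H) x = 0 := by
        rw [← e1.trans e0.symm |> sub_eq_zero.2]; module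
      simpa using this
    subst this
    exact commC_iff.2 fun x => by simp

theorem CommC.of_eig {A : selfAdjoint (H →L[ℂ] H)} {x : H} {l : ℂ}
    (h : (A : H →L[ℂ] H) x = l • x) : CommC A (rk x) := commC_rk_iff.2 ⟨l, h⟩

theorem scalarEq_zero_iff_commC {A : selfAdjoint (H →L[ℂ] H)} :
    ScalarEq A 0 ↔ ∀ C, CommC A C :=
  ⟨fun h => h.commC, fun h => scalarEq_zero_of_eig fun _ => commC_rk_iff.1 (h _)⟩

/-- `(C - a) (C - b) = 0`. -/
def Quad (C : selfAdjoint (H →L[ℂ] H)) (a b : ℝ) : Prop :=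
  ∀ x, (C : H →L[ℂ] H) ((C : H →L[ℂ] H) x) = ((a + b : ℝ) : ℂ) • (C : H →L[ℂ] H) x
    - ((a * b : ℝ) : ℂ) • x

theorem Quad.symm {C : selfAdjoint (H →L[ℂ] H)} {a b : ℝ} (h : Quad C a b) : Quad C b a := by
  intro x; rw [h x, add_comm, mul_comm]

theorem Quad.apply_sub {C : selfAdjoint (H →L[ℂ] H)} {a b : ℝ} (h : Quad C a b) (v : H) :
    (C : H →L[ℂ] H) ((C : H →L[ℂ] H) v - (b : ℂ) • v)
      = (a : ℂ) • ((C : H →L[ℂ] H) v - (b : ℂ) • v) := by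
  rw [map_sub, map_smul, h v]; push_cast; module

theorem quad_rk (x : H) : Quad (rk x) (‖x‖ ^ 2) 0 := by
  intro v
  simp only [rk_apply, inner_smul_right, inner_self_eq_norm_sq_to_K]
  push_cast
  simp only [Complex.coe_algebraMap]
  module

theorem inner_eq_zero_of_eig {C : selfAdjoint (H →L[ℂ] H)} {a b : ℝ} (hab : a ≠ b) {x y : H}
    (hx : (C : H →L[ℂ] H) x = (a : ℂ) • x) (hy : (C : H →L[ℂ] H) y = (b : ℂ) • y) :
    ⟪x, y⟫ = 0 := by
  have h := inner_val_apply C x y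
  rw [hx, hy, inner_smul_left, inner_smul_right, Complex.conj_ofReal] at h
  by_contra h0
  exact hab (by exact_mod_cast mul_right_cancel₀ h0 h)

theorem Quad.ne {C : selfAdjoint (H →L[ℂ] H)} {a b : ℝ} (h : Quad C a b)
    (hC : ¬ ScalarEq C 0) : a ≠ b := by
  rintro rfl
  apply hC
  refine ⟨a, sa_ext fun v => ?_⟩
  set u := (C : H →L[ℂ] H) v - (a : ℂ) • v with hu
  have h1 : (C : H →L[ℂ] H) u = (a : ℂ) • u := h.apply_sub v
  have h2 : ⟪u, u⟫ = 0 := by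
    nth_rw 2 [hu]
    rw [inner_sub_right, ← inner_val_apply, h1, inner_smul_left, inner_smul_right,
      Complex.conj_ofReal, sub_self]
  rw [zero_add, smul_val_apply, one_val_apply, ← sub_eq_zero, ← hu, inner_self_eq_zero.1 h2]

/-- The eigenspace of `C` for `a`. -/
def eigSub (C : selfAdjoint (H →L[ℂ] H)) (a : ℝ) : Submodule ℂ H where
  carrier := {x | (C : H →L[ℂ] H) x = (a : ℂ) • x}
  add_mem' {x y} hx hy := by
    simp only [Set.mem_ofPred_eq] at *
    rw [map_add, hx, hy, smul_add]
  zero_mem' := by simp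
  smul_mem' c x hx := by
    simp only [Set.mem_ofPred_eq] at *
    rw [map_smul, hx, smul_comm]

theorem mem_eigSub {C : selfAdjoint (H →L[ℂ] H)} {a : ℝ} {x : H} :
    x ∈ eigSub C a ↔ (C : H →L[ℂ] H) x = (a : ℂ) • x := Iff.rfl

/-- The double commutant of an operator with a quadratic minimal polynomial. -/
theorem Quad.bicommutant {C D : selfAdjoint (H →L[ℂ] H)} {a b : ℝ} (h : Quad C a b) (hab : a ≠ b)
    (hD : ∀ X, CommC C X → CommC D X) : ∃ s t : ℝ, D = s • C + t • 1 := by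
  have key (c : ℝ) : ∃ r : ℝ, ∀ w ∈ eigSub C c, (D : H →L[ℂ] H) w = (r : ℂ) • w :=
    exists_real_smul_of_eig _ fun w hw => commC_rk_iff.1 (hD _ (CommC.of_eig hw))
  obtain ⟨l, hl⟩ := key a
  obtain ⟨m, hm⟩ := key b
  have hab' : ((a : ℂ) - b) ≠ 0 := sub_ne_zero.2 (by exact_mod_cast hab)
  refine ⟨(l - m) / (a - b), (m * a - l * b) / (a - b), sa_ext fun v => ?_⟩
  have h1 := hl _ (mem_eigSub.2 (h.apply_sub v))
  have h2 := hm _ (mem_eigSub.2 (h.symm.apply_sub v))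
  rw [map_sub, map_smul] at h1 h2
  have e : ((a : ℂ) - b) • (D : H →L[ℂ] H) v = ((l : ℂ) - m) • (C : H →L[ℂ] H) v
      + ((m : ℂ) * a - l * b) • v := by
    linear_combination (norm := module) h1 - h2
  rw [add_val_apply, smul_val_apply, smul_val_apply, one_val_apply]
  push_cast
  rw [div_eq_inv_mul, div_eq_inv_mul, mul_smul, mul_smul, ← smul_add, ← e,
    inv_smul_smul₀ hab']

theorem rk_bicommutant {D : selfAdjoint (H →L[ℂ] H)} {x : H} (hx : x ≠ 0)
    (hD : ∀ X, CommC (rk x) X → CommC D X) : ∃ s t : ℝ, D = s • rk x + t • 1 :=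
  (quad_rk x).bicommutant (by positivity) hD

theorem commC_lin {A B : selfAdjoint (H →L[ℂ] H)} {s t : ℝ} (h : CommC A B) :
    CommC (s • A + t • 1) B := (h.smul_left s).congr_left (ScalarEq.symm ⟨t, rfl⟩)

theorem commC_lin_iff {A B : selfAdjoint (H →L[ℂ] H)} {s t : ℝ} (hs : s ≠ 0) :
    CommC (s • A + t • 1) B ↔ CommC A B :=
  (commC_congr_left ⟨t, rfl⟩).trans (commC_smul_iff hs)

/-- `C` has a minimal nontrivial double commutant. -/
def Minl (C : selfAdjoint (H →L[ℂ] H)) : Prop :=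
  ∀ D, (¬ ∀ X, CommC D X) → (∀ X, CommC C X → CommC D X) → ∀ X, CommC D X → CommC C X

theorem Quad.minl {C : selfAdjoint (H →L[ℂ] H)} {a b : ℝ} (h : Quad C a b) : Minl C := by
  by_cases hC : ScalarEq C 0
  · exact fun D _ _ X _ => hC.commC X
  intro D hD hCD X hX
  obtain ⟨s, t, rfl⟩ := h.bicommutant (h.ne hC) hCD
  refine (commC_lin_iff ?_).1 hX
  rintro rfl
  exact hD (ScalarEq.commC ⟨t, by module⟩)

theorem Minl.spectrum_lt {C : selfAdjoint (H →L[ℂ] H)} (hC : Minl C) {p q r : ℝ}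
    (hp : p ∈ spectrum ℝ (C : H →L[ℂ] H)) (hq : q ∈ spectrum ℝ (C : H →L[ℂ] H))
    (hr : r ∈ spectrum ℝ (C : H →L[ℂ] H)) (hpq : p < q) (hqr : q < r) : False := by
  obtain ⟨m, hqm, hmr⟩ := exists_between hqr
  have hsa : IsSelfAdjoint (C : H →L[ℂ] H) := C.2
  let f : ℝ → ℝ := fun t => max (t - m) 0
  let g : ℝ → ℝ := fun t => max (m - t) 0
  have hf : Continuous f := by fun_prop
  have hg : Continuous g := by fun_prop
  let D : selfAdjoint (H →L[ℂ] H) := ⟨cfc f (C : H →L[ℂ] H), cfc_predicate f _⟩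
  have hDC : ∀ X, CommC C X → CommC D X := fun X hX =>
    (hsa.commute_cfc (show Commute (C : H →L[ℂ] H) X from hX) f)
  have hD : ¬ ∀ X, CommC D X := by
    intro h
    obtain ⟨k, hk⟩ := scalarEq_zero_iff_commC.2 h
    have : cfc f (C : H →L[ℂ] H) = cfc (fun _ => k) (C : H →L[ℂ] H) := by
      rw [cfc_const k _ hsa]
      have := congrArg (fun T : selfAdjoint (H →L[ℂ] H) => (T : H →L[ℂ] H)) hk
      simp only [zero_add, selfAdjoint.val_smul, selfAdjoint.val_one] at this
      rw [Algebra.algebraMap_eq_smul_one]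
      exact this
    have h2 := (cfc_eq_cfc_iff_eqOn hsa (by fun_prop) (by fun_prop)).1 this
    have e1 := h2 hp
    have e2 := h2 hr
    simp only [f] at e1 e2
    rw [max_eq_right (by linarith)] at e1
    rw [max_eq_left (by linarith)] at e2
    linarith
  have hCX := hC D hD hDC
  obtain ⟨l, hl⟩ := exists_real_smul_of_eig (A := C) (eigSub D 0) fun w hw =>
    commC_rk_iff.1 (hCX _ (CommC.of_eig hw))
  have hz : cfc (fun t => (t - l) * g t) (C : H →L[ℂ] H) =
      cfc (fun _ => (0 : ℝ)) (C : H →L[ℂ] H) := by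
    rw [cfc_const_zero, cfc_mul (fun t => t - l) g _ (by fun_prop) (by fun_prop),
      cfc_sub (fun t => t) (fun _ => l) _ (by fun_prop) (by fun_prop), cfc_id' ℝ _ hsa,
      cfc_const l _ hsa]
    ext v
    have hu : cfc g (C : H →L[ℂ] H) v ∈ eigSub D 0 := by
      rw [mem_eigSub]
      have : cfc (fun t => f t * g t) (C : H →L[ℂ] H) = 0 := by
        rw [← cfc_const_zero ℝ (C : H →L[ℂ] H)]
        congr 1
        funext t
        simp only [f, g]
        rcases le_total t m with h | h
        · rw [max_eq_right (a := t - m) (by linarith), zero_mul]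
        · rw [max_eq_right (a := m - t) (by linarith), mul_zero]
      rw [cfc_mul f g _ (by fun_prop) (by fun_prop)] at this
      simpa using congrArg (fun T : H →L[ℂ] H => T v) this
    have := hl _ hu
    simp [Algebra.algebraMap_eq_smul_one, this]
  have h2 := (cfc_eq_cfc_iff_eqOn hsa (by fun_prop) (by fun_prop)).1 hz
  have e1 := h2 hp
  have e2 := h2 hq
  simp only [g] at e1 e2
  rw [max_eq_left (by linarith)] at e1 e2
  rcases mul_eq_zero.1 e1 with e1 | e1 <;> rcases mul_eq_zero.1 e2 with e2 | e2 <;> linarith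

theorem Minl.quad {C : selfAdjoint (H →L[ℂ] H)} (hC : Minl C) : ∃ a b, Quad C a b := by
  have hsa : IsSelfAdjoint (C : H →L[ℂ] H) := C.2
  have hS : ∃ a b, ∀ t ∈ spectrum ℝ (C : H →L[ℂ] H), t = a ∨ t = b := by
    by_contra! h
    obtain ⟨p, hp, -⟩ := h 0 0
    obtain ⟨q, hq, hqp, -⟩ := h p p
    obtain ⟨r, hr, hrp, hrq⟩ := h p q
    have H3 := @Minl.spectrum_lt _ _ _ _ _ hC
    rcases lt_or_gt_of_ne hqp with h1 | h1 <;> rcases lt_or_gt_of_ne hrp with h2 | h2 <;>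
      rcases lt_or_gt_of_ne hrq with h3 | h3 <;>
      first
        | exact H3 hp hq hr (by linarith) (by linarith)
        | exact H3 hp hr hq (by linarith) (by linarith)
        | exact H3 hq hp hr (by linarith) (by linarith)
        | exact H3 hq hr hp (by linarith) (by linarith)
        | exact H3 hr hp hq (by linarith) (by linarith)
        | exact H3 hr hq hp (by linarith) (by linarith)
  obtain ⟨a, b, hab⟩ := hS
  refine ⟨a, b, fun x => ?_⟩
  have hz : cfc (fun t => (t - a) * (t - b)) (C : H →L[ℂ] H) = 0 := by
    rw [← cfc_const_zero ℝ (C : H →L[ℂ] H)]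
    refine cfc_congr fun t ht => ?_
    rcases hab t ht with rfl | rfl <;> simp
  rw [cfc_mul (fun t => t - a) (fun t => t - b) _ (by fun_prop) (by fun_prop),
      cfc_sub (fun t => t) (fun _ => a) _ (by fun_prop) (by fun_prop),
      cfc_sub (fun t => t) (fun _ => b) _ (by fun_prop) (by fun_prop), cfc_id' ℝ _ hsa,
      cfc_const a _ hsa, cfc_const b _ hsa] at hz
  have := congrArg (fun T : H →L[ℂ] H => T x) hz
  simp only [Algebra.algebraMap_eq_smul_one, mul_apply_eq_comp, sub_apply,
    smul_apply, one_apply_eq_self, map_sub, ← Complex.coe_smul, map_smul,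
    zero_apply] at this
  push_cast
  linear_combination (norm := module) this

theorem exists_orth (hdim : 3 ≤ Module.rank ℂ H) (x y : H) :
    ∃ v : H, v ≠ 0 ∧ ⟪x, v⟫ = 0 ∧ ⟪y, v⟫ = 0 := by
  classical
  set W := Submodule.span ℂ (({x, y} : Finset H) : Set H) with hW
  have hr : Module.rank ℂ W ≤ 2 :=
    (rank_span_finset_le _).trans (by exact_mod_cast Finset.card_le_two)
  have hne : Wᗮ ≠ ⊥ := by
    intro h
    have : FiniteDimensional ℂ W := FiniteDimensional.span_finset ℂ _
    rw [Submodule.orthogonal_eq_bot_iff] at h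
    rw [h, rank_top] at hr
    have := hdim.trans hr
    norm_num at this
  obtain ⟨v, hv, hv0⟩ := Submodule.exists_mem_ne_zero_of_ne_bot hne
  rw [Submodule.mem_orthogonal] at hv
  exact ⟨v, hv0, hv x (Submodule.subset_span (by simp)), hv y (Submodule.subset_span (by simp))⟩

theorem exists_orth_unit (hdim : 3 ≤ Module.rank ℂ H) (x y : H) :
    ∃ v : H, ‖v‖ = 1 ∧ ⟪x, v⟫ = 0 ∧ ⟪y, v⟫ = 0 := by
  obtain ⟨v, hv, h1, h2⟩ := exists_orth hdim x y
  exact ⟨((‖v‖⁻¹ : ℝ) : ℂ) • v, by simp [norm_smul, hv], by rw [inner_smul_right, h1, mul_zero],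
    by rw [inner_smul_right, h2, mul_zero]⟩

theorem exists_smul_add_orth (x v : H) : ∃ (l : ℂ) (w : H), v = l • x + w ∧ ⟪x, w⟫ = 0 := by
  by_cases hx : x = 0
  · exact ⟨0, v, by simp, by simp [hx]⟩
  refine ⟨⟪x, v⟫ / ⟪x, x⟫, v - (⟪x, v⟫ / ⟪x, x⟫) • x, by module, ?_⟩
  rw [inner_sub_right, inner_smul_right, div_mul_cancel₀ _ (inner_self_ne_zero.2 hx), sub_self]

theorem sa_ext_of_orth {A B : selfAdjoint (H →L[ℂ] H)} {x : H}
    (hx : (A : H →L[ℂ] H) x = (B : H →L[ℂ] H) x)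
    (h : ∀ w, ⟪x, w⟫ = 0 → (A : H →L[ℂ] H) w = (B : H →L[ℂ] H) w) : A = B := by
  refine sa_ext fun v => ?_
  obtain ⟨l, w, rfl, hw⟩ := exists_smul_add_orth x v
  rw [map_add, map_add, map_smul, map_smul, hx, h w hw]

theorem rk_self (x : H) : (rk x : H →L[ℂ] H) x = ((‖x‖ ^ 2 : ℝ) : ℂ) • x := by
  rw [rk_apply, inner_self_eq_norm_sq_to_K]; push_cast; rfl

theorem rk_orth {x w : H} (h : ⟪x, w⟫ = 0) : (rk x : H →L[ℂ] H) w = 0 := by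
  rw [rk_apply, h, zero_smul]

theorem not_scalarEq_rk (hdim : 3 ≤ Module.rank ℂ H) {x : H} (hx : x ≠ 0) :
    ¬ ScalarEq (rk x) 0 := by
  rintro ⟨k, hk⟩
  obtain ⟨v, hv, hxv, -⟩ := exists_orth hdim x x
  have h1 : (rk x : H →L[ℂ] H) v = (k : ℂ) • v := by
    rw [hk, zero_add, smul_val_apply, one_val_apply]
  rw [rk_orth hxv] at h1
  have hk0 : k = 0 := by
    simpa [hv] using h1.symm
  have h2 : (rk x : H →L[ℂ] H) x = 0 := by
    rw [hk, hk0, zero_smul, zero_add, zero_val_apply]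
  rw [rk_self] at h2
  simp [hx] at h2

/-- A property defined by commutativity only that singles out the operators `s • rk x + t • 1`. -/
def RankOneLike (C : selfAdjoint (H →L[ℂ] H)) : Prop :=
  (¬ ∀ X, CommC C X) ∧ Minl C ∧ ∀ D, CommC D C → Minl D →
    ∀ E, (∀ X, CommC C X → CommC D X → CommC E X) → (¬ ∀ X, CommC C X → CommC E X) →
      ∀ X, CommC C X → CommC E X → CommC D X

theorem rankOneLike_rk_aux {x : H} {D E : selfAdjoint (H →L[ℂ] H)} {p q : ℝ}
    (hx : x ≠ 0) (hD : Quad D p q) (hpq : p ≠ q) (hDx : (D : H →L[ℂ] H) x = (p : ℂ) • x)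
    (hE : ∀ X, CommC (rk x) X → CommC D X → CommC E X)
    (hE' : ¬ ∀ X, CommC (rk x) X → CommC E X) (X : selfAdjoint (H →L[ℂ] H))
    (hX : CommC (rk x) X) (hEX : CommC E X) : CommC D X := by
  obtain ⟨l, hl⟩ := exists_real_smul_of_eig (A := E) (eigSub D p ⊓ (ℂ ∙ x)ᗮ) fun w hw => by
    rw [Submodule.mem_inf, Submodule.mem_orthogonal_singleton_iff_inner_right] at hw
    exact commC_rk_iff.1 (hE _ (CommC.of_eig (l := 0) (by rw [rk_orth hw.2, zero_smul]))
      (CommC.of_eig hw.1))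
  obtain ⟨m, hm⟩ := exists_real_smul_of_eig (A := E) (eigSub D q) fun w hw =>
    commC_rk_iff.1 (hE _ (CommC.of_eig (l := 0)
      (by rw [rk_orth (inner_eq_zero_of_eig hpq hDx hw), zero_smul])) (CommC.of_eig hw))
  obtain ⟨e, he⟩ : ∃ e : ℝ, (E : H →L[ℂ] H) x = (e : ℂ) • x :=
    (commC_rk_iff.1 (hE _ (CommC.of_eig (rk_self x)) (CommC.of_eig hDx))).real
  have hx2 : (‖x‖ : ℂ) ≠ 0 := by exact_mod_cast norm_ne_zero_iff.2 hx
  have key : (p - q) • E = (l - m) • D + (((p - q) * (e - l) / ‖x‖ ^ 2) • rk x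
      + (m * p - l * q) • 1) := by
    refine sa_ext_of_orth (x := x) ?_ fun w hw => ?_
    · simp only [add_val_apply, smul_val_apply, one_val_apply, he, hDx, rk_self]
      push_cast
      match_scalars
      field_simp
      ring
    · have h1 := hl ((D : H →L[ℂ] H) w - (q : ℂ) • w) (by
        rw [Submodule.mem_inf, Submodule.mem_orthogonal_singleton_iff_inner_right]
        refine ⟨hD.apply_sub w, ?_⟩
        rw [inner_sub_right, ← inner_val_apply, hDx, inner_smul_left, inner_smul_right, hw]
        simp)
      have h2 := hm _ (mem_eigSub.2 (hD.symm.apply_sub w))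
      rw [map_sub, map_smul] at h1 h2
      simp only [add_val_apply, smul_val_apply, one_val_apply, rk_orth hw]
      push_cast
      linear_combination (norm := module) h1 - h2
  have hpq' : p - q ≠ 0 := sub_ne_zero.2 hpq
  by_cases hlm : l = m
  · refine absurd (fun Y hY => ?_) hE'
    rw [← commC_smul_iff hpq', key, hlm, sub_self, zero_smul, zero_add]
    exact commC_lin hY
  · rw [← commC_smul_iff (sub_ne_zero.2 hlm), eq_sub_of_add_eq key.symm]
    have h3 := (hEX.smul_left (p - q)).add_left
      ((commC_lin (s := (p - q) * (e - l) / ‖x‖ ^ 2) (t := m * p - l * q) hX).smul_left (-1))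
    convert h3 using 1
    module

theorem rankOneLike_rk (hdim : 3 ≤ Module.rank ℂ H) {x : H} (hx : x ≠ 0) :
    RankOneLike (rk x) := by
  refine ⟨fun h => not_scalarEq_rk hdim hx (scalarEq_zero_iff_commC.2 h), (quad_rk x).minl, ?_⟩
  intro D hDx hD E hE hE' X hX hEX
  by_cases hD0 : ScalarEq D 0
  · exact hD0.commC X
  obtain ⟨p, q, hQ⟩ := hD.quad
  have hpq := hQ.ne hD0
  obtain ⟨d, hd⟩ := (commC_rk_iff.1 hDx).real
  have h1 := hQ x
  rw [hd, map_smul, hd, smul_smul, smul_smul, ← sub_smul] at h1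
  have h2 := smul_left_injective ℂ hx h1
  have h3 : (d - p) * (d - q) = 0 := by
    have : d * d = (p + q) * d - p * q := by exact_mod_cast h2
    linear_combination this
  rcases mul_eq_zero.1 h3 with h | h <;> obtain rfl := sub_eq_zero.1 h
  · exact rankOneLike_rk_aux hx hQ hpq hd hE hE' X hX hEX
  · exact rankOneLike_rk_aux hx hQ.symm hpq.symm hd hE hE' X hX hEX

theorem exists_unit_mem_eigSub {C : selfAdjoint (H →L[ℂ] H)} {a b : ℝ} (h : Quad C a b)
    (hC : ¬ ScalarEq C 0) : ∃ y ∈ eigSub C a, ‖y‖ = 1 := by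
  by_contra! h'
  have h0 : ∀ v ∈ eigSub C a, v = 0 := by
    intro v hv
    by_contra hv0
    exact h' (((‖v‖⁻¹ : ℝ) : ℂ) • v) (Submodule.smul_mem _ _ hv) (by simp [norm_smul, hv0])
  refine hC ⟨b, sa_ext fun v => ?_⟩
  rw [zero_add, smul_val_apply, one_val_apply]
  exact sub_eq_zero.1 (h0 _ (h.apply_sub v))

theorem eq_rk_of_eigSub {C : selfAdjoint (H →L[ℂ] H)} {a b : ℝ} (h : Quad C a b) {y : H}
    (hy : y ∈ eigSub C a) (hy1 : ‖y‖ = 1) (h0 : ∀ w ∈ eigSub C a, ⟪y, w⟫ = 0 → w = 0) :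
    C = (a - b) • rk y + b • 1 := by
  rw [mem_eigSub] at hy
  refine sa_ext_of_orth (x := y) ?_ fun w hw => ?_
  · simp only [add_val_apply, smul_val_apply, one_val_apply, rk_self, hy1, hy]
    push_cast; module
  · simp only [add_val_apply, smul_val_apply, one_val_apply, rk_orth hw, smul_zero, zero_add]
    refine sub_eq_zero.1 (h0 _ (h.apply_sub w) ?_)
    rw [inner_sub_right, ← inner_val_apply, hy, inner_smul_left, inner_smul_right, hw]
    simp

theorem ne_smul_add_of_orth {y w : H} {l : ℂ} (hy : ‖y‖ = 1) (hw : w ≠ 0) (hyw : ⟪y, w⟫ = 0) :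
    y ≠ l • (y + w) := by
  intro h
  have h1 := congrArg (fun u => ⟪y, u⟫) h
  simp only [inner_smul_right, inner_add_right, hyw, inner_self_eq_norm_sq_to_K, hy] at h1
  have hl : l = 1 := by simpa using h1.symm
  rw [hl, one_smul] at h
  exact hw (by simpa using h)

theorem RankOneLike.exists_rk {C : selfAdjoint (H →L[ℂ] H)} (hC : RankOneLike C) :
    ∃ x : H, x ≠ 0 ∧ ∃ s t : ℝ, s ≠ 0 ∧ C = s • rk x + t • 1 := by
  obtain ⟨hC0, hCm, hC⟩ := hC
  rw [← scalarEq_zero_iff_commC] at hC0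
  obtain ⟨a, b, hQ⟩ := hCm.quad
  have hab := hQ.ne hC0
  obtain ⟨y, hy, hy1⟩ := exists_unit_mem_eigSub hQ hC0
  obtain ⟨z, hz, hz1⟩ := exists_unit_mem_eigSub hQ.symm hC0
  have hyn : y ≠ 0 := by rintro rfl; simp at hy1
  have hzn : z ≠ 0 := by rintro rfl; simp at hz1
  by_cases h1 : ∀ w ∈ eigSub C a, ⟪y, w⟫ = 0 → w = 0
  · exact ⟨y, hyn, _, _, sub_ne_zero.2 hab, eq_rk_of_eigSub hQ hy hy1 h1⟩
  by_cases h2 : ∀ w ∈ eigSub C b, ⟪z, w⟫ = 0 → w = 0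
  · exact ⟨z, hzn, _, _, sub_ne_zero.2 hab.symm, eq_rk_of_eigSub hQ.symm hz hz1 h2⟩
  exfalso
  push Not at h1 h2
  obtain ⟨y', hy', hyy, hy0⟩ := h1
  obtain ⟨z', hz', hzz, hz0⟩ := h2
  have hyz {u v : H} (hu : u ∈ eigSub C a) (hv : v ∈ eigSub C b) : ⟪u, v⟫ = 0 :=
    inner_eq_zero_of_eig hab hu hv
  have hzy {u v : H} (hu : u ∈ eigSub C b) (hv : v ∈ eigSub C a) : ⟪u, v⟫ = 0 :=
    inner_eq_zero_of_eig hab.symm hu hv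
  have hnn (u : H) (hu : ‖u‖ = 1) : ⟪u, u⟫ = 1 := by
    rw [inner_self_eq_norm_sq_to_K, hu]; simp
  have hD : Quad (rk y + rk z) 1 0 := by
    intro v
    simp only [add_val_apply, rk_apply, inner_add_right, inner_smul_right, hyz hy hz, hzy hz hy,
      hnn y hy1, hnn z hz1]
    simp
  have := hC (rk y + rk z) ((CommC.of_eig hy).symm.add_left (CommC.of_eig hz).symm) hD.minl
    (rk y) ?_ ?_ (rk (z + z')) ?_ ?_
  · obtain ⟨l, hl⟩ := commC_rk_iff.1 this
    rw [add_val_apply, rk_orth (hyz hy ((eigSub C b).add_mem hz hz')), zero_add, rk_apply,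
      inner_add_right, hzz, hnn z hz1, add_zero, one_smul] at hl
    exact ne_smul_add_of_orth hz1 hz0 hzz hl
  · intro X hCX hDX
    refine (commC_rk_iff.2 ⟨⟪y, (X : H →L[ℂ] H) y⟫, ?_⟩ : CommC X (rk y)).symm
    rw [commC_iff] at hCX hDX
    have e1 : (X : H →L[ℂ] H) y ∈ eigSub C a := by
      rw [mem_eigSub, hCX, mem_eigSub.1 hy, map_smul]
    have e2 := hDX y
    simp only [add_val_apply, rk_apply, hnn y hy1, hzy hz hy, hzy hz e1] at e2
    simpa using e2.symm
  · intro h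
    obtain ⟨l, hl⟩ := commC_rk_iff.1 (h (rk (y + y')) (CommC.of_eig ((eigSub C a).add_mem hy hy')))
    rw [rk_apply, inner_add_right, hyy, hnn y hy1, add_zero, one_smul] at hl
    exact ne_smul_add_of_orth hy1 hy0 hyy hl
  · exact CommC.of_eig ((eigSub C b).add_mem hz hz')
  · exact CommC.of_eig (l := 0) (by
      rw [rk_orth (hyz hy ((eigSub C b).add_mem hz hz')), zero_smul])

/-- Surjective maps preserving the quasi-commutativity of `A - B` and `C`. -/
structure QPres (φ : selfAdjoint (H →L[ℂ] H) → selfAdjoint (H →L[ℂ] H)) : Prop where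
  surj : Function.Surjective φ
  commQ : ∀ A B C, CommQ (A - B) C ↔ CommQ (φ A - φ B) (φ C)

namespace QPres

variable {φ : selfAdjoint (H →L[ℂ] H) → selfAdjoint (H →L[ℂ] H)}

theorem scalarEq (h : QPres φ) {A B : selfAdjoint (H →L[ℂ] H)} :
    ScalarEq A B ↔ ScalarEq (φ A) (φ B) := by
  rw [scalarEq_iff_sub, scalarEq_zero_iff_commQ, scalarEq_iff_sub (A := φ A),
    scalarEq_zero_iff_commQ]
  exact (forall_congr' fun C => h.commQ A B C).trans h.surj.forall.symm

theorem zero (h : QPres φ) : ScalarEq (φ 0) 0 := by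
  rw [scalarEq_zero_iff_commQ]
  intro X
  obtain ⟨A, rfl⟩ := h.surj X
  obtain ⟨B, hB⟩ := h.surj 0
  have := (h.commQ A B 0).1 (Or.inl (by simp))
  rw [hB, sub_zero] at this
  exact this.imp Eq.symm fun h => by rwa [add_comm]

theorem scalarEq_zero (h : QPres φ) {A : selfAdjoint (H →L[ℂ] H)} :
    ScalarEq A 0 ↔ ScalarEq (φ A) 0 :=
  h.scalarEq.trans ⟨fun h' => h'.trans h.zero, fun h' => h'.trans h.zero.symm⟩

theorem commC_sub (h : QPres φ) {A B C : selfAdjoint (H →L[ℂ] H)} :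
    CommC (A - B) C ↔ CommC (φ A - φ B) (φ C) := by
  rw [commC_iff_commQ, commC_iff_commQ]
  constructor
  · intro hc k
    obtain ⟨A', hA'⟩ := h.surj (φ A + k • 1)
    obtain ⟨l, rfl⟩ := h.scalarEq.2 ⟨k, hA'⟩
    have := (h.commQ (A + l • 1) B C).1 (by rw [add_sub_right_comm]; exact hc l)
    rwa [hA', add_sub_right_comm] at this
  · intro hc k
    obtain ⟨l, hl⟩ := (h.scalarEq (A := A + k • 1) (B := A)).1 ⟨k, rfl⟩
    have := (h.commQ (A + k • 1) B C).2 (by rw [hl, add_sub_right_comm]; exact hc l)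
    rwa [add_sub_right_comm] at this

theorem commC (h : QPres φ) {A C : selfAdjoint (H →L[ℂ] H)} :
    CommC A C ↔ CommC (φ A) (φ C) := by
  have := h.commC_sub (A := A) (B := 0) (C := C)
  rw [sub_zero] at this
  rw [this]
  refine commC_congr_left ?_
  simpa using (ScalarEq.refl (φ A)).sub h.zero

theorem forall_congr_map (h : QPres φ) {p q : selfAdjoint (H →L[ℂ] H) → Prop}
    (hpq : ∀ X, p X ↔ q (φ X)) : (∀ X, p X) ↔ ∀ X, q X :=
  (forall_congr' hpq).trans h.surj.forall.symm

theorem forall_commC (h : QPres φ) {A : selfAdjoint (H →L[ℂ] H)} :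
    (∀ X, CommC A X) ↔ ∀ X, CommC (φ A) X :=
  h.forall_congr_map fun _ => h.commC

theorem forall_commC_imp (h : QPres φ) {A B : selfAdjoint (H →L[ℂ] H)} :
    (∀ X, CommC A X → CommC B X) ↔ ∀ X, CommC (φ A) X → CommC (φ B) X :=
  h.forall_congr_map fun _ => imp_congr h.commC h.commC

theorem forall_commC_imp_imp (h : QPres φ) {A B C : selfAdjoint (H →L[ℂ] H)} :
    (∀ X, CommC A X → CommC B X → CommC C X) ↔
      ∀ X, CommC (φ A) X → CommC (φ B) X → CommC (φ C) X :=
  h.forall_congr_map fun _ => imp_congr h.commC (imp_congr h.commC h.commC)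

theorem minl_iff (h : QPres φ) {C : selfAdjoint (H →L[ℂ] H)} : Minl C ↔ Minl (φ C) :=
  h.forall_congr_map fun _ => imp_congr (not_congr h.forall_commC)
    (imp_congr h.forall_commC_imp h.forall_commC_imp)

theorem rankOneLike_iff (h : QPres φ) {C : selfAdjoint (H →L[ℂ] H)} :
    RankOneLike C ↔ RankOneLike (φ C) :=
  and_congr (not_congr h.forall_commC) <| and_congr h.minl_iff <|
    h.forall_congr_map fun _ => imp_congr h.commC <| imp_congr h.minl_iff <|
      h.forall_congr_map fun _ => imp_congr h.forall_commC_imp_imp <|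
        imp_congr (not_congr h.forall_commC_imp) h.forall_commC_imp_imp

theorem exists_rk (h : QPres φ) (hdim : 3 ≤ Module.rank ℂ H) (x : H) :
    ∃ y : H, ‖y‖ = ‖x‖ ∧ ∃ s t : ℝ, s ≠ 0 ∧ φ (rk x) = s • rk y + t • 1 := by
  by_cases hx : x = 0
  · subst hx
    have h0 : rk (0 : H) = 0 := sa_ext fun z => by rw [rk_apply, smul_zero, zero_val_apply]
    obtain ⟨k, hk⟩ := h.zero
    exact ⟨0, rfl, 1, k, one_ne_zero, by rw [h0, hk, one_smul]⟩
  obtain ⟨y, hy, s, t, hs, hst⟩ := (h.rankOneLike_iff.1 (rankOneLike_rk hdim hx)).exists_rk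
  refine ⟨((‖x‖ / ‖y‖ : ℝ) : ℂ) • y, by simp [norm_smul, hy], s * (‖y‖ / ‖x‖) ^ 2, t,
    by simp [hs, hx, hy], ?_⟩
  rw [hst]
  congr 1
  refine sa_ext fun z => ?_
  simp only [smul_val_apply, rk_apply, inner_smul_left, Complex.conj_ofReal]
  push_cast
  have h1 : (‖x‖ : ℂ) ≠ 0 := by exact_mod_cast norm_ne_zero_iff.2 hx
  have h2 : (‖y‖ : ℂ) ≠ 0 := by exact_mod_cast norm_ne_zero_iff.2 hy
  match_scalars
  field_simp

end QPres

/-- A `QPres` map together with the map it induces on vectors. -/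
structure VecMap (φ : selfAdjoint (H →L[ℂ] H) → selfAdjoint (H →L[ℂ] H)) (θ : H → H) : Prop
    extends QPres φ where
  dim : 3 ≤ Module.rank ℂ H
  norm_eq : ∀ x, ‖θ x‖ = ‖x‖
  map_rk : ∀ x, ∃ s t : ℝ, s ≠ 0 ∧ φ (rk x) = s • rk (θ x) + t • 1

theorem rk_smul (l : ℂ) (x : H) : rk (l • x) = (‖l‖ ^ 2) • rk x := by
  refine sa_ext fun z => ?_
  rw [smul_val_apply, rk_apply, rk_apply, inner_smul_left, smul_smul, smul_smul]
  congr 1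
  push_cast
  rw [← Complex.conj_mul']
  ring

theorem collinear_of_commC (hdim : 3 ≤ Module.rank ℂ H) {x z : H} (hx : x ≠ 0)
    (h : ∀ X, CommC (rk x) X → CommC (rk z) X) : ∃ l : ℂ, z = l • x := by
  by_cases hz : z = 0
  · exact ⟨0, by simp [hz]⟩
  obtain ⟨s, t, hst⟩ := rk_bicommutant hx h
  obtain ⟨v, hv, hxv, hzv⟩ := exists_orth hdim x z
  have h1 := congrArg (fun T : selfAdjoint (H →L[ℂ] H) => (T : H →L[ℂ] H) v) hst
  simp only [add_val_apply, smul_val_apply, one_val_apply, rk_orth hxv, rk_orth hzv, smul_zero,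
    zero_add] at h1
  have ht : t = 0 := by simpa [hv] using h1.symm
  have h2 := congrArg (fun T : selfAdjoint (H →L[ℂ] H) => (T : H →L[ℂ] H) z) hst
  simp only [ht, zero_smul, add_zero, smul_val_apply] at h2
  rw [rk_apply, rk_apply, smul_smul] at h2
  refine ⟨⟪z, z⟫⁻¹ * (s * ⟪x, z⟫), ?_⟩
  rw [mul_smul, ← h2, inv_smul_smul₀ (inner_self_ne_zero.2 hz)]

theorem scalarEq_rk_independent (hdim : 3 ≤ Module.rank ℂ H) {x y : H}
    (hxy : LinearIndependent ℂ ![x, y]) {a b : ℝ} (h : ScalarEq (a • rk x + b • rk y) 0) :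
    a = 0 ∧ b = 0 := by
  obtain ⟨k, hk⟩ := h
  have hk' (v : H) := congrArg (fun T : selfAdjoint (H →L[ℂ] H) => (T : H →L[ℂ] H) v) hk
  simp only [add_val_apply, smul_val_apply, one_val_apply, zero_add] at hk'
  obtain ⟨v, hv, hxv, hyv⟩ := exists_orth hdim x y
  have h1 := hk' v
  rw [rk_orth hxv, rk_orth hyv] at h1
  have hk0 : k = 0 := by simpa [hv] using h1.symm
  rw [LinearIndependent.pair_iff] at hxy
  have h2 (v : H) : (a : ℂ) * ⟪x, v⟫ = 0 ∧ (b : ℂ) * ⟪y, v⟫ = 0 := by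
    refine hxy _ _ ?_
    have := hk' v
    rw [hk0, Complex.ofReal_zero, zero_smul, rk_apply, rk_apply, smul_smul, smul_smul] at this
    exact this
  have hx : x ≠ 0 := by
    rintro rfl
    simpa using (hxy 1 0 (by simp)).1
  have hy : y ≠ 0 := by
    rintro rfl
    simpa using (hxy 0 1 (by simp)).2
  exact ⟨by simpa [hx] using (h2 x).1, by simpa [hy] using (h2 y).2⟩

namespace VecMap

variable {φ : selfAdjoint (H →L[ℂ] H) → selfAdjoint (H →L[ℂ] H)} {θ : H → H}

theorem commC_sub_rk (h : VecMap φ θ) {A B : selfAdjoint (H →L[ℂ] H)} {x : H} :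
    CommC (A - B) (rk x) ↔ CommC (φ A - φ B) (rk (θ x)) := by
  obtain ⟨s, t, hs, hst⟩ := h.map_rk x
  rw [h.commC_sub, hst, commC_comm, commC_lin_iff hs, commC_comm]

theorem commC_rk (h : VecMap φ θ) {A : selfAdjoint (H →L[ℂ] H)} {x : H} :
    CommC A (rk x) ↔ CommC (φ A) (rk (θ x)) := by
  obtain ⟨s, t, hs, hst⟩ := h.map_rk x
  rw [h.commC, hst, commC_comm, commC_lin_iff hs, commC_comm]

theorem eig_sub (h : VecMap φ θ) {A B : selfAdjoint (H →L[ℂ] H)} {x : H} :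
    Eig (A - B) x ↔ Eig (φ A - φ B) (θ x) := by
  rw [← commC_rk_iff, ← commC_rk_iff, h.commC_sub_rk]

theorem eig (h : VecMap φ θ) {A : selfAdjoint (H →L[ℂ] H)} {x : H} :
    Eig A x ↔ Eig (φ A) (θ x) := by
  rw [← commC_rk_iff, ← commC_rk_iff, h.commC_rk]

theorem ne_zero (h : VecMap φ θ) {x : H} (hx : x ≠ 0) : θ x ≠ 0 := by
  rwa [← norm_ne_zero_iff, h.norm_eq, norm_ne_zero_iff]

theorem vec_zero (h : VecMap φ θ) : θ 0 = 0 := by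
  rw [← norm_eq_zero, h.norm_eq, norm_zero]

theorem exists_smul (h : VecMap φ θ) (l : ℂ) (x : H) :
    ∃ m : ℂ, ‖m‖ = ‖l‖ ∧ θ (l • x) = m • θ x := by
  by_cases hx : x = 0
  · exact ⟨l, rfl, by rw [hx, smul_zero, h.vec_zero, smul_zero]⟩
  obtain ⟨m, hm⟩ := collinear_of_commC h.dim (h.ne_zero hx) (z := θ (l • x)) fun X => by
    obtain ⟨A, rfl⟩ := h.surj X
    rw [commC_comm, ← h.commC_rk, commC_comm (A := rk _), ← h.commC_rk, commC_comm, rk_smul,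
      commC_comm (B := _ • _)]
    exact CommC.smul_left _
  refine ⟨m, ?_, hm⟩
  have := congrArg norm hm
  rw [h.norm_eq, norm_smul, norm_smul, h.norm_eq] at this
  exact (mul_right_cancel₀ (norm_ne_zero_iff.2 hx) this).symm

theorem linearIndependent (h : VecMap φ θ) {x y : H} (hxy : LinearIndependent ℂ ![x, y]) :
    LinearIndependent ℂ ![θ x, θ y] := by
  have hx : x ≠ 0 := by simpa using hxy.ne_zero 0
  have hy : y ≠ 0 := by simpa using hxy.ne_zero 1
  rw [LinearIndependent.pair_iff' (h.ne_zero hx)]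
  rw [LinearIndependent.pair_iff' hx] at hxy
  intro l hl
  have hl0 : l ≠ 0 := by
    rintro rfl
    exact h.ne_zero hy (by rw [← hl, zero_smul])
  obtain ⟨m, hm⟩ := collinear_of_commC h.dim hx (z := y) fun X hX => by
    rw [commC_comm, h.commC_rk] at hX ⊢
    rw [← hl, rk_smul, commC_comm, commC_smul_iff (by positivity)]
    exact hX.symm
  exact hxy m hm.symm

theorem inner_eq_zero_of_eig_rk {x y : H} (hxy : LinearIndependent ℂ ![x, y])
    (h : Eig (rk x) y) : ⟪x, y⟫ = 0 := by
  obtain ⟨l, hl⟩ := h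
  rw [rk_apply] at hl
  exact (LinearIndependent.pair_iff.1 hxy _ (-l) (by rw [hl]; module)).1

theorem eig_rk_rk (h : VecMap φ θ) {x y : H} : Eig (rk x) y ↔ Eig (rk (θ x)) (θ y) := by
  obtain ⟨s, t, hs, hst⟩ := h.map_rk x
  rw [h.eig, hst, ← commC_rk_iff, commC_lin_iff hs, commC_rk_iff]

theorem linearIndependent_of_orth {x y : H} (hx : x ≠ 0) (hy : y ≠ 0) (hxy : ⟪x, y⟫ = 0) :
    LinearIndependent ℂ ![x, y] := by
  rw [LinearIndependent.pair_iff' hx]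
  rintro l rfl
  rw [inner_smul_right, mul_eq_zero, inner_self_eq_zero] at hxy
  rcases hxy with rfl | rfl <;> simp at *

theorem orth (h : VecMap φ θ) {x y : H} (hxy : ⟪x, y⟫ = 0) : ⟪θ x, θ y⟫ = 0 := by
  by_cases hx : x = 0
  · rw [hx, h.vec_zero, inner_zero_left]
  by_cases hy : y = 0
  · rw [hy, h.vec_zero, inner_zero_right]
  exact inner_eq_zero_of_eig_rk (h.linearIndependent (linearIndependent_of_orth hx hy hxy))
    (h.eig_rk_rk.1 ⟨0, by rw [rk_orth hxy, zero_smul]⟩)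

theorem inner_ne_zero (h : VecMap φ θ) {x y : H} (hxy : LinearIndependent ℂ ![x, y])
    (hne : ⟪x, y⟫ ≠ 0) : ⟪θ x, θ y⟫ ≠ 0 := fun h0 =>
  hne (inner_eq_zero_of_eig_rk hxy (h.eig_rk_rk.2 ⟨0, by rw [rk_orth h0, zero_smul]⟩))

end VecMap

variable (H) in
/-- Self-adjoint operators modulo real multiples of the identity. -/
def ModScalar : Type _ := selfAdjoint (H →L[ℂ] H) ⧸ Submodule.span ℝ {(1 : selfAdjoint (H →L[ℂ] H))}

instance : AddCommGroup (ModScalar H) :=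
  inferInstanceAs (AddCommGroup (_ ⧸ Submodule.span ℝ {(1 : selfAdjoint (H →L[ℂ] H))}))

instance : Module ℝ (ModScalar H) :=
  inferInstanceAs (Module ℝ (_ ⧸ Submodule.span ℝ {(1 : selfAdjoint (H →L[ℂ] H))}))

/-- The class of an operator modulo real multiples of the identity. -/
def cls : selfAdjoint (H →L[ℂ] H) →ₗ[ℝ] ModScalar H :=
  Submodule.mkQ (Submodule.span ℝ {(1 : selfAdjoint (H →L[ℂ] H))})

theorem cls_eq_zero {A : selfAdjoint (H →L[ℂ] H)} : cls A = 0 ↔ ScalarEq A 0 := by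
  refine (Submodule.Quotient.mk_eq_zero _).trans (Submodule.mem_span_singleton.trans ?_)
  simp only [ScalarEq, zero_add, eq_comm]

theorem cls_eq {A B : selfAdjoint (H →L[ℂ] H)} : cls A = cls B ↔ ScalarEq A B := by
  rw [scalarEq_iff_sub, ← cls_eq_zero, map_sub, sub_eq_zero]

theorem rk_zero : rk (0 : H) = 0 := sa_ext fun z => by rw [rk_apply, smul_zero, zero_val_apply]

theorem cls_rk_independent (hdim : 3 ≤ Module.rank ℂ H) {x y : H}
    (hxy : LinearIndependent ℂ ![x, y]) {a b : ℝ} (h : a • cls (rk x) + b • cls (rk y) = 0) :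
    a = 0 ∧ b = 0 := by
  rw [← map_smul, ← map_smul, ← map_add, cls_eq_zero] at h
  exact scalarEq_rk_independent hdim hxy h

theorem cls_rk_ne_zero (hdim : 3 ≤ Module.rank ℂ H) {x : H} (hx : x ≠ 0) : cls (rk x) ≠ 0 :=
  fun h => not_scalarEq_rk hdim hx (cls_eq_zero.1 h)

variable (H) in
/-- The self-adjoint operators of finite rank. -/
def finRank : Submodule ℝ (selfAdjoint (H →L[ℂ] H)) := Submodule.span ℝ (Set.range rk)

theorem rk_mem (x : H) : rk x ∈ finRank H := Submodule.subset_span ⟨x, rfl⟩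

theorem rk_add_add_rk_sub (x y : H) :
    rk (x + y) + rk (x - y) = (2 : ℝ) • rk x + (2 : ℝ) • rk y := by
  refine sa_ext fun z => ?_
  simp only [add_val_apply, smul_val_apply, rk_apply, inner_add_left, inner_sub_left]
  push_cast
  module

namespace VecMap

variable {φ : selfAdjoint (H →L[ℂ] H) → selfAdjoint (H →L[ℂ] H)} {θ : H → H}

theorem map_zero_cls (h : VecMap φ θ) : cls (φ 0) = 0 := cls_eq_zero.2 h.zero

theorem exists_map_add (h : VecMap φ θ) (A : selfAdjoint (H →L[ℂ] H)) (t : ℝ) (y : H) :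
    ∃ s : ℝ, cls (φ (A + t • rk y)) = cls (φ A) + s • cls (rk (θ y)) := by
  by_cases hy : y = 0
  · exact ⟨0, by rw [hy, rk_zero, smul_zero, add_zero, zero_smul, add_zero]⟩
  obtain ⟨s, k, hs⟩ := rk_bicommutant (D := φ (A + t • rk y) - φ A) (h.ne_zero hy) fun X hX => by
    obtain ⟨C, rfl⟩ := h.surj X
    rw [← h.commC_sub, add_sub_cancel_left]
    rw [commC_comm, ← h.commC_rk, commC_comm] at hX
    exact hX.smul_left t
  refine ⟨s, ?_⟩
  rw [← sub_eq_iff_eq_add', ← map_sub, ← map_smul, cls_eq]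
  exact ⟨k, hs⟩

/-- The increments of `φ` in the direction `rk x` do not change after translation by `S`. -/
def Inv (φ : selfAdjoint (H →L[ℂ] H) → selfAdjoint (H →L[ℂ] H)) (x : H)
    (S : selfAdjoint (H →L[ℂ] H)) : Prop :=
  ∀ A (t : ℝ), cls (φ (A + S + t • rk x)) - cls (φ (A + S)) = cls (φ (A + t • rk x)) - cls (φ A)

theorem Inv.add {x : H} {S T : selfAdjoint (H →L[ℂ] H)} (hS : Inv φ x S) (hT : Inv φ x T) :
    Inv φ x (S + T) := by
  intro A t
  rw [← hS A t, ← hT (A + S) t, add_assoc A S T]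

theorem inv_of_linearIndependent (h : VecMap φ θ) {x y : H} (hxy : LinearIndependent ℂ ![x, y])
    (s : ℝ) : Inv φ x (s • rk y) := by
  intro A t
  obtain ⟨a, ha⟩ := h.exists_map_add A t x
  obtain ⟨b, hb⟩ := h.exists_map_add (A + t • rk x) s y
  obtain ⟨c, hc⟩ := h.exists_map_add A s y
  obtain ⟨d, hd⟩ := h.exists_map_add (A + s • rk y) t x
  rw [add_right_comm, hb, ha, hc] at hd
  obtain ⟨h1, h2⟩ := cls_rk_independent h.dim (h.linearIndependent hxy) (a := a - d) (b := b - c)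
    (by linear_combination (norm := module) hd)
  rw [add_right_comm, hb, ha, hc, sub_eq_zero.1 h2]
  module

theorem inv_rk (h : VecMap φ θ) (x y : H) (s : ℝ) : Inv φ x (s • rk y) := by
  by_cases hx : x = 0
  · intro A t; simp [hx, rk_zero]
  by_cases hxy : LinearIndependent ℂ ![x, y]
  · exact h.inv_of_linearIndependent hxy s
  rw [LinearIndependent.pair_iff' hx] at hxy
  push Not at hxy
  obtain ⟨l, rfl⟩ := hxy
  obtain ⟨v, hv, hxv, -⟩ := exists_orth h.dim x x
  have hli := linearIndependent_of_orth hx hv hxv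
  rw [LinearIndependent.pair_iff] at hli
  have key (c : ℂ) (hc : c ≠ 0) (a : ℂ) : LinearIndependent ℂ ![x, a • x + c • v] := by
    rw [LinearIndependent.pair_iff' hx]
    intro m hm
    exact hc (neg_eq_zero.1 (hli (m - a) (-c) (by rw [← sub_eq_zero] at hm; rw [← hm]; module)).2)
  have e : s • rk (l • x) = (s * ‖l‖ ^ 2 / 2) • rk ((1 : ℂ) • x + (1 : ℂ) • v)
      + (s * ‖l‖ ^ 2 / 2) • rk ((1 : ℂ) • x + (-1 : ℂ) • v)
      + (-(s * ‖l‖ ^ 2)) • rk ((0 : ℂ) • x + (1 : ℂ) • v) := by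
    have := rk_add_add_rk_sub x v
    simp only [one_smul, zero_smul, zero_add, neg_smul, ← sub_eq_add_neg]
    rw [rk_smul, ← smul_add, this]
    module
  rw [e]
  exact ((h.inv_of_linearIndependent (key _ (by simp) _) _).add
    (h.inv_of_linearIndependent (key _ (by simp) _) _)).add
    (h.inv_of_linearIndependent (key _ (by simp) _) _)

theorem inv_of_mem (h : VecMap φ θ) (x : H) {S : selfAdjoint (H →L[ℂ] H)} (hS : S ∈ finRank H) :
    Inv φ x S := by
  have : ∀ c : ℝ, Inv φ x (c • S) := by
    induction hS using Submodule.span_induction with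
    | mem S hS =>
      obtain ⟨y, rfl⟩ := hS
      exact h.inv_rk x y
    | zero => intro c A t; simp
    | add S T _ _ hS hT => intro c; rw [smul_add]; exact (hS c).add (hT c)
    | smul a S _ hS => intro c; rw [smul_smul]; exact hS _
  simpa using this 1

theorem cls_map_add (h : VecMap φ θ) {A S : selfAdjoint (H →L[ℂ] H)} (hA : A ∈ finRank H)
    (hS : S ∈ finRank H) : cls (φ (A + S)) = cls (φ A) + cls (φ S) := by
  have : ∀ (c : ℝ), ∀ S ∈ finRank H, cls (φ (c • A + S)) = cls (φ (c • A)) + cls (φ S) := by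
    induction hA using Submodule.span_induction with
    | mem A hA =>
      obtain ⟨y, rfl⟩ := hA
      intro c S hS
      have := h.inv_of_mem y hS 0 c
      rw [zero_add, zero_add, h.map_zero_cls, sub_zero, sub_eq_iff_eq_add, add_comm S] at this
      exact this
    | zero => intro c S _; rw [smul_zero, zero_add, h.map_zero_cls, zero_add]
    | add A B hA hB ihA ihB =>
      intro c S hS
      rw [smul_add, add_assoc, ihA c _ (add_mem (Submodule.smul_mem _ _ hB) hS), ihB c S hS,
        ihA c _ (Submodule.smul_mem _ _ hB), add_assoc]
    | smul a A _ hA => intro c S hS; rw [smul_smul]; exact hA _ _ hS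
  simpa using this 1 S hS

end VecMap

theorem ScalarEq.eq_of_apply {A B : selfAdjoint (H →L[ℂ] H)} (h : ScalarEq A B) {v : H}
    (hv : v ≠ 0) (hAB : (A : H →L[ℂ] H) v = (B : H →L[ℂ] H) v) : A = B := by
  obtain ⟨k, rfl⟩ := h
  rw [add_val_apply, add_eq_left, smul_val_apply, one_val_apply, smul_eq_zero_iff_left hv,
    Complex.ofReal_eq_zero] at hAB
  rw [hAB, zero_smul, add_zero]

theorem exists_pos_sq_eq (α : ℝ) : ∃ a : ℝ, 0 < a ∧ a ^ 2 = α * a + 1 := by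
  have h1 : √(α ^ 2 + 4) ^ 2 = α ^ 2 + 4 := Real.sq_sqrt (by positivity)
  have h2 : |α| < √(α ^ 2 + 4) := by
    rw [← Real.sqrt_sq_eq_abs]
    exact Real.sqrt_lt_sqrt (by positivity) (by linarith)
  exact ⟨(α + √(α ^ 2 + 4)) / 2, by linarith [neg_abs_le α], by linear_combination h1 / 4⟩

namespace VecMap

variable {φ : selfAdjoint (H →L[ℂ] H) → selfAdjoint (H →L[ℂ] H)} {θ : H → H}

theorem exists_coeff (h : VecMap φ θ) : ∃ g : H → ℝ → ℝ,
    ∀ x t, cls (φ (t • rk x)) = g x t • cls (rk (θ x)) := by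
  have (x : H) (t : ℝ) : ∃ s : ℝ, cls (φ (t • rk x)) = s • cls (rk (θ x)) := by
    simpa [h.map_zero_cls] using h.exists_map_add 0 t x
  choose g hg using this
  exact ⟨g, hg⟩

variable {g : H → ℝ → ℝ}

theorem coeff_add (h : VecMap φ θ) (hg : ∀ x t, cls (φ (t • rk x)) = g x t • cls (rk (θ x)))
    {x : H} (hx : x ≠ 0) (s t : ℝ) : g x (s + t) = g x s + g x t := by
  have h1 := h.cls_map_add (Submodule.smul_mem _ s (rk_mem x)) (Submodule.smul_mem _ t (rk_mem x))
  rw [← add_smul, hg, hg, hg, ← add_smul] at h1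
  exact smul_left_injective ℝ (cls_rk_ne_zero h.dim (h.ne_zero hx)) h1

theorem coeff_ne_zero (h : VecMap φ θ) (hg : ∀ x t, cls (φ (t • rk x)) = g x t • cls (rk (θ x)))
    {x : H} (hx : x ≠ 0) {t : ℝ} (ht : t ≠ 0) : g x t ≠ 0 := by
  intro h0
  have h1 := hg x t
  rw [h0, zero_smul, cls_eq_zero, ← h.scalarEq_zero, ← cls_eq_zero, map_smul,
    smul_eq_zero_iff_right ht] at h1
  exact cls_rk_ne_zero h.dim hx h1

theorem coeff_rel (h : VecMap φ θ) (hg : ∀ x t, cls (φ (t • rk x)) = g x t • cls (rk (θ x)))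
    {x w : H} (hx : x ≠ 0) (hxw : ⟪x, w⟫ = 0) (hn : ‖w‖ = ‖x‖) {α : ℝ} (hα : α ≠ 0) (r : ℝ) :
    g (x + w) r * g x α = g x (α * r) * g (x + w) 1 := by
  obtain ⟨a, ha, ha2⟩ := exists_pos_sq_eq α
  have hw : w ≠ 0 := by rwa [← norm_ne_zero_iff, hn, norm_ne_zero_iff]
  have hwx : ⟪w, x⟫ = 0 := inner_eq_zero_symm.1 hxw
  have hli := linearIndependent_of_orth hx hw hxw
  have hxy : LinearIndependent ℂ ![x + w, x] := by
    rw [LinearIndependent.pair_iff] at hli ⊢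
    intro s t hst
    have := hli (s + t) s (by rw [← hst]; module)
    exact ⟨this.2, by simpa [this.2] using this.1⟩
  set z := (a : ℂ) • x + w with hz
  have hxz : LinearIndependent ℂ ![x, z] := by
    rw [LinearIndependent.pair_iff] at hli ⊢
    intro s t hst
    have := hli (s + t * a) t (by rw [← hst, hz]; module)
    exact ⟨by simpa [this.2] using this.1, this.2⟩
  have ha1 : a ≠ 1 := by
    rintro rfl
    exact hα (by linarith)
  have hyz : LinearIndependent ℂ ![x + w, z] := by
    rw [LinearIndependent.pair_iff] at hli ⊢
    intro s t hst
    have := hli (s + t * a) (s + t) (by rw [← hst, hz]; module)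
    have ht : t * ((a : ℂ) - 1) = 0 := by linear_combination this.1 - this.2
    have ht0 : t = 0 := (mul_eq_zero.1 ht).resolve_right (sub_ne_zero.2 (by exact_mod_cast ha1))
    exact ⟨by simpa [ht0] using this.2, ht0⟩
  have hx0 : (‖x‖ : ℂ) ≠ 0 := by exact_mod_cast norm_ne_zero_iff.2 hx
  have i1 : ⟪x, z⟫ = a * (‖x‖ : ℂ) ^ 2 := by
    rw [hz, inner_add_right, inner_smul_right, hxw, inner_self_eq_norm_sq_to_K, add_zero]; rfl
  have i2 : ⟪x + w, z⟫ = (a + 1) * (‖x‖ : ℂ) ^ 2 := by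
    rw [inner_add_left, i1, hz, inner_add_right, inner_smul_right, hwx,
      inner_self_eq_norm_sq_to_K, hn, mul_zero, zero_add, add_mul, one_mul]; rfl
  have hq : ⟪θ x, θ z⟫ ≠ 0 := h.inner_ne_zero hxz (by
    rw [i1]
    exact mul_ne_zero (by exact_mod_cast ha.ne') (pow_ne_zero 2 hx0))
  have hp : ⟪θ (x + w), θ z⟫ ≠ 0 := h.inner_ne_zero hyz (by
    rw [i2]
    exact mul_ne_zero (by exact_mod_cast (by linarith : a + 1 ≠ 0)) (pow_ne_zero 2 hx0))
  have key (r : ℝ) : ∃ m : ℂ, ((g (x + w) r : ℂ) * ⟪θ (x + w), θ z⟫) • θ (x + w)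
      + ((g x (α * r) : ℂ) * ⟪θ x, θ z⟫) • θ x = m • θ z := by
    have h1 : Eig (r • rk (x + w) + (α * r) • rk x) z := by
      refine ⟨r * ‖x‖ ^ 2 * (a + 1), ?_⟩
      rw [add_val_apply, smul_val_apply, smul_val_apply, rk_apply, rk_apply, i1, i2, hz]
      have ha2' : (a : ℂ) ^ 2 = α * a + 1 := by exact_mod_cast ha2
      push_cast
      match_scalars
      · linear_combination (-(r * (‖x‖ : ℂ) ^ 2)) * ha2'
      · ring
    have h2 := h.cls_map_add (Submodule.smul_mem _ r (rk_mem (x + w)))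
      (Submodule.smul_mem _ (α * r) (rk_mem x))
    rw [hg, hg, ← map_smul, ← map_smul, ← map_add, cls_eq] at h2
    obtain ⟨m, hm⟩ := (h.eig.1 h1).congr h2
    refine ⟨m, ?_⟩
    rw [← hm, add_val_apply, smul_val_apply, smul_val_apply, rk_apply, rk_apply, smul_smul,
      smul_smul]
  have hli' := h.linearIndependent hxy
  rw [LinearIndependent.pair_iff] at hli'
  obtain ⟨m, hm⟩ := key r
  obtain ⟨m₁, hm₁⟩ := key 1
  obtain ⟨e1, e2⟩ := hli' (m₁ * (g (x + w) r * ⟪θ (x + w), θ z⟫) -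
      m * (g (x + w) 1 * ⟪θ (x + w), θ z⟫))
    (m₁ * (g x (α * r) * ⟪θ x, θ z⟫) - m * (g x (α * 1) * ⟪θ x, θ z⟫)) (by
      linear_combination (norm := module) m₁ • hm - m • hm₁)
  have hm0 : m₁ ≠ 0 := by
    rintro rfl
    rw [zero_smul] at hm₁
    have := (hli' _ _ hm₁).1
    have hne := h.coeff_ne_zero hg (x := x + w) (by simpa using hxy.ne_zero 0) one_ne_zero
    exact mul_ne_zero (by exact_mod_cast hne) hp this
  have f1 : m₁ * g (x + w) r = m * g (x + w) 1 :=
    mul_right_cancel₀ hp (by linear_combination e1)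
  have f2 : m₁ * g x (α * r) = m * g x α := by
    rw [mul_one] at e2
    exact mul_right_cancel₀ hq (by linear_combination e2)
  have f3 : (g (x + w) r : ℂ) * g x α = g x (α * r) * g (x + w) 1 :=
    mul_left_cancel₀ hm0 (by linear_combination (g x α : ℂ) * f1 - (g (x + w) 1 : ℂ) * f2)
  exact_mod_cast f3

theorem coeff_eq_mul (h : VecMap φ θ) (hg : ∀ x t, cls (φ (t • rk x)) = g x t • cls (rk (θ x)))
    {x : H} (hx : x ≠ 0) (t : ℝ) : g x t = g x 1 * t := by
  obtain ⟨u, hu, hxu, -⟩ := exists_orth_unit h.dim x x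
  set w := (‖x‖ : ℂ) • u with hw
  have hxw : ⟪x, w⟫ = 0 := by rw [hw, inner_smul_right, hxu, mul_zero]
  have hn : ‖w‖ = ‖x‖ := by rw [hw, norm_smul, hu]; simp
  have hy : x + w ≠ 0 := fun h0 => by
    have : ⟪x, x + w⟫ = 0 := by rw [h0, inner_zero_right]
    rw [inner_add_right, hxw, add_zero, inner_self_eq_zero] at this
    exact hx this
  have hx1 := h.coeff_ne_zero hg hx one_ne_zero
  have hy1 := h.coeff_ne_zero hg hy one_ne_zero
  have h0 : g x 0 = 0 := by simpa using h.coeff_add hg hx 0 0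
  have hmul (α r : ℝ) : g x (α * r) * g x 1 = g x α * g x r := by
    by_cases hα : α = 0
    · rw [hα, zero_mul, h0, zero_mul, zero_mul]
    have e1 := h.coeff_rel hg hx hxw hn hα r
    have e2 := h.coeff_rel hg hx hxw hn one_ne_zero r
    rw [one_mul] at e2
    exact mul_right_cancel₀ hy1 (by linear_combination (g x α) * e2 - (g x 1) * e1)
  let f : ℝ →+* ℝ :=
    { toFun := fun t => g x t / g x 1
      map_one' := div_self hx1
      map_mul' := fun a b => by
        field_simp
        exact hmul a b
      map_zero' := by rw [h0, zero_div]
      map_add' := fun a b => by rw [h.coeff_add hg hx, add_div] }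
  have : f t = t := by rw [Subsingleton.elim f (RingHom.id ℝ)]; rfl
  rw [mul_comm]
  exact (div_eq_iff hx1).1 this

theorem coeff_smul (h : VecMap φ θ) (hg : ∀ x t, cls (φ (t • rk x)) = g x t • cls (rk (θ x)))
    {x : H} (hx : x ≠ 0) {l : ℂ} (hl : l ≠ 0) : g (l • x) 1 = g x 1 := by
  obtain ⟨m, hm, hlm⟩ := h.exists_smul l x
  have h1 := hg (l • x) 1
  rw [hlm, rk_smul, rk_smul, one_smul, hg, hm, map_smul, smul_smul] at h1
  have h2 := smul_left_injective ℝ (cls_rk_ne_zero h.dim (h.ne_zero hx)) h1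
  simp only [h.coeff_eq_mul hg hx (‖l‖ ^ 2)] at h2
  exact (mul_right_cancel₀ (pow_ne_zero 2 (norm_ne_zero_iff.2 hl)) h2).symm

theorem coeff_add_orth (h : VecMap φ θ)
    (hg : ∀ x t, cls (φ (t • rk x)) = g x t • cls (rk (θ x)))
    {x w : H} (hx : x ≠ 0) (hxw : ⟪x, w⟫ = 0) (hn : ‖w‖ = ‖x‖) : g (x + w) 1 = g x 1 := by
  have hw : w ≠ 0 := by rwa [← norm_ne_zero_iff, hn, norm_ne_zero_iff]
  have hwx : ⟪w, x⟫ = 0 := inner_eq_zero_symm.1 hxw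
  have e1 := congrArg (fun A => cls (φ A)) (rk_add_add_rk_sub x w)
  have hs (y : H) : cls (φ (rk y)) = g y 1 • cls (rk (θ y)) := by rw [← hg, one_smul]
  simp only [h.cls_map_add (rk_mem (x + w)) (rk_mem (x - w)),
    h.cls_map_add (Submodule.smul_mem _ 2 (rk_mem x)) (Submodule.smul_mem _ 2 (rk_mem w)),
    hs, hg, ← map_smul, ← map_add, cls_eq] at e1
  obtain ⟨v, hv, hxv, hwv⟩ := exists_orth h.dim x w
  have e2 := e1.eq_of_apply (h.ne_zero hv) (by
    simp only [add_val_apply, smul_val_apply]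
    rw [rk_orth (h.orth hxv), rk_orth (h.orth hwv),
      rk_orth (h.orth (x := x + w) (by rw [inner_add_left, hxv, hwv, add_zero])),
      rk_orth (h.orth (x := x - w) (by rw [inner_sub_left, hxv, hwv, sub_zero]))]
    simp)
  have e3 := congrArg (fun A : selfAdjoint (H →L[ℂ] H) =>
    ⟪θ x, (A : H →L[ℂ] H) (θ (x + w))⟫) e2
  simp only [add_val_apply, smul_val_apply] at e3
  have hmp : ⟪x - w, x + w⟫ = 0 := by
    rw [inner_sub_left, inner_add_right, inner_add_right, hxw, hwx, inner_self_eq_norm_sq_to_K,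
      inner_self_eq_norm_sq_to_K, hn]
    ring
  have hyn : ‖x + w‖ ^ 2 = 2 * ‖x‖ ^ 2 := by
    have := norm_add_sq_eq_norm_sq_add_norm_sq_of_inner_eq_zero x w hxw
    rw [hn] at this
    linear_combination this
  rw [rk_self, rk_orth (h.orth hmp), h.norm_eq, hyn, rk_apply, rk_apply] at e3
  simp only [inner_add_right, inner_smul_right, h.orth hxw, inner_self_eq_norm_sq_to_K,
    h.norm_eq, h.coeff_eq_mul hg hx 2, inner_zero_right] at e3
  have hne : ⟪θ x, θ (x + w)⟫ ≠ 0 := by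
    refine h.inner_ne_zero ?_ ?_
    · have hli := linearIndependent_of_orth hx hw hxw
      rw [LinearIndependent.pair_iff] at hli ⊢
      intro s t hst
      have := hli (s + t) t (by rw [← hst]; module)
      exact ⟨by simpa [this.2] using this.1, this.2⟩
    · rw [inner_add_right, hxw, add_zero]
      exact inner_self_ne_zero.2 hx
  have hx0 : (‖x‖ : ℂ) ≠ 0 := by exact_mod_cast norm_ne_zero_iff.2 hx
  simp only [Complex.coe_algebraMap] at e3
  push_cast at e3
  have e4 : (g (x + w) 1 : ℂ) = g x 1 :=
    mul_right_cancel₀ (mul_ne_zero (pow_ne_zero 2 hx0) hne) (by linear_combination e3 / 2)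
  exact_mod_cast e4

theorem coeff_eq_of_orth (h : VecMap φ θ)
    (hg : ∀ x t, cls (φ (t • rk x)) = g x t • cls (rk (θ x)))
    {x u : H} (hx : x ≠ 0) (hu : ‖u‖ = 1) (hxu : ⟪x, u⟫ = 0) : g x 1 = g u 1 := by
  have hx0 : (‖x‖ : ℂ) ≠ 0 := by exact_mod_cast norm_ne_zero_iff.2 hx
  have hu0 : u ≠ 0 := by rintro rfl; simp at hu
  have hy : (‖x‖ : ℂ) • u ≠ 0 := smul_ne_zero hx0 hu0
  have hn : ‖(‖x‖ : ℂ) • u‖ = ‖x‖ := by rw [norm_smul, hu]; simp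
  have hxy : ⟪x, (‖x‖ : ℂ) • u⟫ = 0 := by rw [inner_smul_right, hxu, mul_zero]
  rw [← h.coeff_smul hg hu0 hx0, ← h.coeff_add_orth hg hx hxy hn,
    ← h.coeff_add_orth hg hy (inner_eq_zero_symm.1 hxy) hn.symm, add_comm]

theorem exists_const (h : VecMap φ θ) : ∃ c : ℝ, c ≠ 0 ∧
    ∀ x (t : ℝ), cls (φ (t • rk x)) = (c * t) • cls (rk (θ x)) := by
  obtain ⟨g, hg⟩ := h.exists_coeff
  obtain ⟨e, he, -⟩ := exists_orth h.dim 0 0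
  refine ⟨g e 1, h.coeff_ne_zero hg he one_ne_zero, fun x t => ?_⟩
  by_cases hx : x = 0
  · rw [hx, rk_zero, smul_zero, h.map_zero_cls, h.vec_zero, rk_zero, map_zero, smul_zero]
  obtain ⟨u, hu, hxu, heu⟩ := exists_orth_unit h.dim x e
  rw [h.coeff_eq_of_orth hg he hu heu, ← h.coeff_eq_of_orth hg hx hu hxu, hg, h.coeff_eq_mul hg hx]

end VecMap

/-- A `VecMap` for which `φ (t • rk x)` is `(c * t) • rk (θ x)` modulo scalars. -/
structure ConstMap (φ : selfAdjoint (H →L[ℂ] H) → selfAdjoint (H →L[ℂ] H)) (θ : H → H) (c : ℝ) :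
    Prop extends VecMap φ θ where
  ne : c ≠ 0
  map_smul_rk : ∀ x (t : ℝ), cls (φ (t • rk x)) = (c * t) • cls (rk (θ x))

/-- The combination of the operators `rk x` with the coefficients in a list. -/
def rkSum (l : List (ℝ × H)) : selfAdjoint (H →L[ℂ] H) := (l.map fun p => p.1 • rk p.2).sum

theorem rkSum_cons (p : ℝ × H) (l : List (ℝ × H)) : rkSum (p :: l) = p.1 • rk p.2 + rkSum l :=
  List.sum_cons

theorem rkSum_nil : rkSum ([] : List (ℝ × H)) = 0 := rfl

theorem rkSum_mem (l : List (ℝ × H)) : rkSum l ∈ finRank H := by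
  induction l with
  | nil => exact zero_mem _
  | cons p l ih => rw [rkSum_cons]; exact add_mem (Submodule.smul_mem _ _ (rk_mem _)) ih

theorem norm_inner_sq_eq_re (A : H) (e : H) :
    (⟪e, (rk A : H →L[ℂ] H) e⟫).re = ‖⟪A, e⟫‖ ^ 2 := by
  rw [rk_apply, inner_smul_right, ← inner_conj_symm e A, Complex.mul_conj', ← Complex.ofReal_pow,
    Complex.ofReal_re]

namespace ConstMap

variable {φ : selfAdjoint (H →L[ℂ] H) → selfAdjoint (H →L[ℂ] H)} {θ : H → H} {c : ℝ}

theorem map_rkSum (h : ConstMap φ θ c) (l : List (ℝ × H)) :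
    cls (φ (rkSum l)) = c • cls (rkSum (l.map fun p => (p.1, θ p.2))) := by
  induction l with
  | nil => rw [List.map_nil, rkSum_nil, h.map_zero_cls, map_zero, smul_zero]
  | cons p l ih =>
    rw [List.map_cons, rkSum_cons, rkSum_cons,
      h.cls_map_add (Submodule.smul_mem _ _ (rk_mem _)) (rkSum_mem l), ih, h.map_smul_rk, map_add,
      map_smul, smul_add, smul_smul]

theorem scalarEq_rkSum (h : ConstMap φ θ c) {l : List (ℝ × H)} (hl : rkSum l = 0) :
    ScalarEq (rkSum (l.map fun p => (p.1, θ p.2))) 0 := by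
  have := h.map_rkSum l
  rw [hl, h.map_zero_cls, eq_comm, smul_eq_zero_iff_right h.ne] at this
  exact cls_eq_zero.1 this

theorem norm_inner_add (h : ConstMap φ θ c) {e v : H} (hev : ⟪e, v⟫ = 0) (he : ‖e‖ = 1) (α : ℂ) :
    ‖⟪θ (α • e + v), θ e⟫‖ = ‖α‖ := by
  have hee : ⟪e, e⟫ = 1 := by rw [inner_self_eq_norm_sq_to_K, he]; simp
  obtain ⟨u, hu, heu, hvu⟩ := exists_orth h.dim e v
  have key (s : ℝ) : 0 ≤ ‖α‖ ^ 2 + s * (‖⟪θ (α • e + v), θ e⟫‖ ^ 2 - ‖α‖ ^ 2) := by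
    have hl : rkSum [(1, α • e + (s : ℂ) • v), (-s, α • e + v), (s * ‖α‖ ^ 2 - ‖α‖ ^ 2, e),
        (s - s ^ 2, v)] = 0 := by
      simp only [rkSum_cons, rkSum_nil]
      refine sa_ext fun z => ?_
      simp only [add_val_apply, smul_val_apply, rk_apply, inner_add_left, inner_smul_left,
        zero_val_apply, Complex.conj_ofReal]
      push_cast
      rw [← Complex.conj_mul']
      module
    have h1 := (h.scalarEq_rkSum hl).eq_of_apply (h.ne_zero hu) (by
      simp only [List.map_cons, List.map_nil, rkSum_cons, rkSum_nil, add_val_apply, smul_val_apply]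
      rw [rk_orth (h.orth heu), rk_orth (h.orth hvu),
        rk_orth (h.orth (x := α • e + v) (by
          simp only [inner_add_left, inner_smul_left, heu, hvu, mul_zero, add_zero])),
        rk_orth (h.orth (x := α • e + (s : ℂ) • v) (by
          simp only [inner_add_left, inner_smul_left, heu, hvu, mul_zero, add_zero]))]
      simp)
    have h2 := congrArg (fun A : selfAdjoint (H →L[ℂ] H) =>
      (⟪θ e, (A : H →L[ℂ] H) (θ e)⟫).re) h1
    simp only [List.map_cons, List.map_nil, rkSum_cons, rkSum_nil, add_val_apply, smul_val_apply,
      inner_add_right, inner_smul_right, Complex.add_re, Complex.re_ofReal_mul,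
      norm_inner_sq_eq_re, zero_val_apply, inner_zero_right, Complex.zero_re,
      h.orth (inner_eq_zero_symm.1 hev), inner_self_eq_norm_sq_to_K,
      h.norm_eq, he] at h2
    simp at h2
    nlinarith [sq_nonneg ‖⟪θ (α • e + (s : ℂ) • v), θ e⟫‖]
  set d := ‖⟪θ (α • e + v), θ e⟫‖ ^ 2 - ‖α‖ ^ 2 with hd
  have hd0 : d = 0 := by
    by_contra hne
    have := key (-(‖α‖ ^ 2 + 1) / d)
    rw [div_mul_cancel₀ _ hne] at this
    linarith
  exact (pow_left_inj₀ (norm_nonneg _) (norm_nonneg _) two_ne_zero).1 (sub_eq_zero.1 hd0)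

theorem norm_inner (h : ConstMap φ θ c) (x y : H) : ‖⟪θ x, θ y⟫‖ = ‖⟪x, y⟫‖ := by
  by_cases hy : y = 0
  · rw [hy, h.vec_zero, inner_zero_right, inner_zero_right]
  have hy0 : (‖y‖ : ℂ) ≠ 0 := by exact_mod_cast norm_ne_zero_iff.2 hy
  obtain ⟨r, e, rfl, he⟩ : ∃ (r : ℂ) (e : H), y = r • e ∧ ‖e‖ = 1 :=
    ⟨(‖y‖ : ℂ), (‖y‖ : ℂ)⁻¹ • y, by rw [smul_inv_smul₀ hy0], by simp [norm_smul, hy]⟩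
  obtain ⟨α, v, hx, hv⟩ := exists_smul_add_orth e x
  obtain ⟨m, hm, hmy⟩ := h.exists_smul r e
  rw [hmy, inner_smul_right, norm_mul, hm, hx, h.norm_inner_add hv he, inner_smul_right,
    norm_mul, inner_add_left, inner_eq_zero_symm.1 hv, inner_smul_left, inner_self_eq_norm_sq_to_K,
    he]
  simp

end ConstMap

/-- A real linear isometry preserving the modulus of `1 + ⟪w, v⟫` is complex linear or
conjugate-linear. -/
theorem map_I_smul_eq_or {E F : Type*} [NormedAddCommGroup E] [InnerProductSpace ℂ E]
    [NormedAddCommGroup F] [InnerProductSpace ℂ F] {τ : E → F}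
    (hadd : ∀ w v, τ (w + v) = τ w + τ v) (hnorm : ∀ w, ‖τ w‖ = ‖w‖)
    (hinner : ∀ w v, ‖1 + ⟪τ w, τ v⟫‖ = ‖1 + ⟪w, v⟫‖) :
    (∀ w, τ (Complex.I • w) = Complex.I • τ w) ∨ (∀ w, τ (Complex.I • w) = -(Complex.I • τ w)) := by
  have hre (w v : E) : (⟪τ w, τ v⟫).re = (⟪w, v⟫).re := by
    have h1 := norm_add_sq (𝕜 := ℂ) (τ w) (τ v)
    have h2 := norm_add_sq (𝕜 := ℂ) w v
    rw [← hadd, hnorm, hnorm, hnorm, h2] at h1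
    simp only [RCLike.re_to_complex] at h1
    linarith
  have him (w v : E) : (⟪τ w, τ v⟫).im = (⟪w, v⟫).im ∨ (⟪τ w, τ v⟫).im = -(⟪w, v⟫).im := by
    have h1 := congrArg (· ^ 2) (hinner w v)
    simp only [Complex.sq_norm, Complex.normSq_apply, Complex.add_re, Complex.one_re,
      Complex.add_im, Complex.one_im, hre, zero_add] at h1
    exact sq_eq_sq_iff_eq_or_eq_neg.1 (by linarith)
  have heq (w : E) : τ (Complex.I • w) = Complex.I • τ w ∨
      τ (Complex.I • w) = -(Complex.I • τ w) := by
    have hn : ‖τ (Complex.I • w)‖ = ‖w‖ := by rw [hnorm, norm_smul]; simp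
    have hn' : ‖Complex.I • τ w‖ = ‖w‖ := by rw [norm_smul, hnorm]; simp
    have hw : (⟪Complex.I • w, w⟫).im = -‖w‖ ^ 2 := by
      rw [inner_smul_left, inner_self_eq_norm_sq_to_K]
      simp [← Complex.ofReal_pow]
    have hi : (⟪τ (Complex.I • w), Complex.I • τ w⟫).re = -(⟪τ (Complex.I • w), τ w⟫).im := by
      rw [inner_smul_right]; simp
    have hs := norm_sub_sq (𝕜 := ℂ) (τ (Complex.I • w)) (Complex.I • τ w)
    have ha := norm_add_sq (𝕜 := ℂ) (τ (Complex.I • w)) (Complex.I • τ w)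
    simp only [RCLike.re_to_complex, hn, hn', hi] at hs ha
    rcases him (Complex.I • w) w with h | h
    · left
      rw [← sub_eq_zero, ← norm_eq_zero, ← sq_eq_zero_iff, hs, h, hw]
      ring
    · right
      rw [eq_neg_iff_add_eq_zero, ← norm_eq_zero, ← sq_eq_zero_iff, ha, h, hw]
      ring
  by_contra! hcon
  obtain ⟨⟨w, hw⟩, v, hv⟩ := hcon
  have hw' := (heq w).resolve_left hw
  have hv' := (heq v).resolve_right hv
  have h := heq (w + v)
  rw [smul_add, hadd, hadd, hw', hv', smul_add] at h
  rcases h with h | h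
  · exact hw (hw'.trans (add_right_cancel h))
  · rw [neg_add] at h
    exact hv (hv'.trans (add_left_cancel h))

/-- The vector `w'` orthogonal to `θ e` for which `θ (e + w)` is collinear with `θ e + w'`. -/
def orthPart (θ : H → H) (e w : H) : H := (rk (θ (e + w)) : H →L[ℂ] H) (θ e) - θ e

namespace ConstMap

variable {φ : selfAdjoint (H →L[ℂ] H) → selfAdjoint (H →L[ℂ] H)} {θ : H → H} {c : ℝ}

theorem inner_self_eq_one (h : ConstMap φ θ c) {e : H} (he : ‖e‖ = 1) : ⟪θ e, θ e⟫ = 1 := by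
  rw [inner_self_eq_norm_sq_to_K, h.norm_eq, he]; simp

theorem norm_inner_base (h : ConstMap φ θ c) {e w : H} (he : ‖e‖ = 1) (hw : ⟪e, w⟫ = 0) :
    ‖⟪θ (e + w), θ e⟫‖ = 1 := by
  rw [h.norm_inner, inner_add_left, inner_eq_zero_symm.1 hw, inner_self_eq_norm_sq_to_K, he]
  simp

theorem add_orthPart (e w : H) :
    θ e + orthPart θ e w = ⟪θ (e + w), θ e⟫ • θ (e + w) := by
  rw [orthPart, rk_apply]; abel

theorem inner_orthPart (h : ConstMap φ θ c) {e w : H} (he : ‖e‖ = 1) (hw : ⟪e, w⟫ = 0) :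
    ⟪θ e, orthPart θ e w⟫ = 0 := by
  rw [orthPart, rk_apply, inner_sub_right, inner_smul_right, h.inner_self_eq_one he,
    ← inner_conj_symm (θ e), Complex.mul_conj', h.norm_inner_base he hw]
  simp

theorem norm_orthPart (h : ConstMap φ θ c) {e w : H} (he : ‖e‖ = 1) (hw : ⟪e, w⟫ = 0) :
    ‖orthPart θ e w‖ = ‖w‖ := by
  have h1 := norm_add_sq_eq_norm_sq_add_norm_sq_of_inner_eq_zero _ _ (h.inner_orthPart he hw)
  have h2 := norm_add_sq_eq_norm_sq_add_norm_sq_of_inner_eq_zero _ _ hw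
  rw [add_orthPart, norm_smul, h.norm_inner_base he hw, one_mul, h.norm_eq, h.norm_eq, h2] at h1
  exact ((mul_self_inj_of_nonneg (norm_nonneg _) (norm_nonneg _)).1 (add_left_cancel h1)).symm

theorem norm_inner_orthPart (h : ConstMap φ θ c) {e w v : H} (he : ‖e‖ = 1) (hw : ⟪e, w⟫ = 0)
    (hv : ⟪e, v⟫ = 0) : ‖1 + ⟪orthPart θ e w, orthPart θ e v⟫‖ = ‖1 + ⟪w, v⟫‖ := by
  have h1 : ‖⟪θ e + orthPart θ e w, θ e + orthPart θ e v⟫‖ = ‖⟪e + w, e + v⟫‖ := by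
    rw [add_orthPart, add_orthPart, inner_smul_left, inner_smul_right, norm_mul, norm_mul,
      RCLike.norm_conj, h.norm_inner_base he hw, h.norm_inner_base he hv, one_mul, one_mul,
      h.norm_inner]
  have hee : ⟪e, e⟫ = 1 := by rw [inner_self_eq_norm_sq_to_K, he]; simp
  simpa only [inner_add_left, inner_add_right, h.inner_self_eq_one he, h.inner_orthPart he hv,
    inner_eq_zero_symm.1 (h.inner_orthPart he hw), hee, hv, inner_eq_zero_symm.1 hw, add_zero,
    zero_add] using h1

theorem rkSum_apply_base (h : ConstMap φ θ c) {e : H} {l : List (ℝ × H)} (hl : rkSum l = 0)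
    {u : H} (hu : (rkSum (l.map fun p => (p.1, θ p.2)) : H →L[ℂ] H) (θ e) = u)
    (heu : ⟪θ e, u⟫ = 0) : u = 0 := by
  obtain ⟨k, hk⟩ := h.scalarEq_rkSum hl
  rw [hk, zero_add, smul_val_apply, one_val_apply] at hu
  rw [← hu, inner_smul_right, mul_eq_zero] at heu
  rcases heu with hk0 | he0
  · rw [← hu, hk0, zero_smul]
  · rw [← hu, inner_self_eq_zero.1 he0, smul_zero]

theorem rk_apply_base (h : ConstMap φ θ c) {e : H} (he : ‖e‖ = 1) :
    (rk (θ e) : H →L[ℂ] H) (θ e) = θ e := by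
  rw [rk_self, h.norm_eq, he]; simp

theorem rk_add_apply_base (e w : H) :
    (rk (θ (e + w)) : H →L[ℂ] H) (θ e) = θ e + orthPart θ e w := by
  rw [orthPart]; abel

theorem orthPart_add (h : ConstMap φ θ c) {e w v : H} (he : ‖e‖ = 1) (hw : ⟪e, w⟫ = 0)
    (hv : ⟪e, v⟫ = 0) : orthPart θ e (w + v) = orthPart θ e w + orthPart θ e v := by
  have hwv : ⟪e, w + v⟫ = 0 := by rw [inner_add_right, hw, hv, add_zero]
  have hl : rkSum [(1, e + (w + v)), (-1, e + w), (-1, e + v), (1, e), (-1, w + v), (1, w),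
      (1, v)] = 0 := by
    simp only [rkSum_cons, rkSum_nil]
    refine sa_ext fun z => ?_
    simp only [add_val_apply, smul_val_apply, rk_apply, inner_add_left, zero_val_apply]
    push_cast
    module
  refine sub_eq_zero.1 (h.rkSum_apply_base (e := e) hl ?_ ?_)
  · simp only [List.map_cons, List.map_nil, rkSum_cons, rkSum_nil, add_val_apply, smul_val_apply,
      rk_add_apply_base, h.rk_apply_base he, rk_orth (h.orth (inner_eq_zero_symm.1 hw)),
      rk_orth (h.orth (inner_eq_zero_symm.1 hv)), rk_orth (h.orth (inner_eq_zero_symm.1 hwv)),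
      zero_val_apply]
    push_cast
    module
  · rw [inner_sub_right, inner_add_right, h.inner_orthPart he hw, h.inner_orthPart he hv,
      h.inner_orthPart he hwv, add_zero, sub_zero]

theorem orthPart_smul (h : ConstMap φ θ c) {e w : H} (he : ‖e‖ = 1) (hw : ⟪e, w⟫ = 0) (t : ℝ) :
    orthPart θ e ((t : ℂ) • w) = (t : ℂ) • orthPart θ e w := by
  have htw : ⟪e, (t : ℂ) • w⟫ = 0 := by rw [inner_smul_right, hw, mul_zero]
  have hl : rkSum [(1, e + (t : ℂ) • w), (-t, e + w), (t - 1, e), (t - t ^ 2, w)] = 0 := by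
    simp only [rkSum_cons, rkSum_nil]
    refine sa_ext fun z => ?_
    simp only [add_val_apply, smul_val_apply, rk_apply, inner_add_left, inner_smul_left,
      Complex.conj_ofReal, zero_val_apply]
    push_cast
    module
  refine sub_eq_zero.1 (h.rkSum_apply_base (e := e) hl ?_ ?_)
  · simp only [List.map_cons, List.map_nil, rkSum_cons, rkSum_nil, add_val_apply, smul_val_apply,
      rk_add_apply_base, h.rk_apply_base he, rk_orth (h.orth (inner_eq_zero_symm.1 hw)),
      zero_val_apply]
    push_cast
    module
  · rw [inner_sub_right, inner_smul_right, h.inner_orthPart he hw, h.inner_orthPart he htw,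
      mul_zero, sub_zero]

theorem orthPart_I_smul (h : ConstMap φ θ c) {e : H} (he : ‖e‖ = 1) :
    (∀ w, ⟪e, w⟫ = 0 → orthPart θ e (Complex.I • w) = Complex.I • orthPart θ e w) ∨
    (∀ w, ⟪e, w⟫ = 0 → orthPart θ e (Complex.I • w) = -(Complex.I • orthPart θ e w)) := by
  have hmem (w : (ℂ ∙ e)ᗮ) : ⟪e, (w : H)⟫ = 0 :=
    Submodule.mem_orthogonal_singleton_iff_inner_right.1 w.2
  refine (map_I_smul_eq_or (τ := fun w : (ℂ ∙ e)ᗮ => orthPart θ e w)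
    (fun w v => h.orthPart_add he (hmem w) (hmem v)) (fun w => h.norm_orthPart he (hmem w))
    (fun w v => h.norm_inner_orthPart he (hmem w) (hmem v))).imp ?_ ?_ <;>
  exact fun H w hw => H ⟨w, Submodule.mem_orthogonal_singleton_iff_inner_right.2 hw⟩

/-- `x = ⟪e, x⟫ • e + w` is sent to `σ ⟪e, x⟫ • θ e + orthPart θ e w`. -/
theorem exists_isometry (h : ConstMap φ θ c) {e : H} (he : ‖e‖ = 1) {σ : ℂ →+* ℂ}
    (hσ : ∀ z, ‖σ z‖ = ‖z‖)
    (hτ : ∀ (z : ℂ) w, ⟪e, w⟫ = 0 → orthPart θ e (z • w) = σ z • orthPart θ e w) :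
    ∃ U : H →ₛₗᵢ[σ] H, ∀ (α : ℂ) w, ⟪e, w⟫ = 0 →
      U (α • e + w) = σ α • θ e + orthPart θ e w := by
  have hee : ⟪e, e⟫ = 1 := by rw [inner_self_eq_norm_sq_to_K, he]; simp
  have horth (x : H) : ⟪e, x - ⟪e, x⟫ • e⟫ = 0 := by
    rw [inner_sub_right, inner_smul_right, hee, mul_one, sub_self]
  let U : H →ₛₗ[σ] H :=
    { toFun := fun x => σ ⟪e, x⟫ • θ e + orthPart θ e (x - ⟪e, x⟫ • e)
      map_add' := fun x y => by
        have : x + y - ⟪e, x + y⟫ • e = (x - ⟪e, x⟫ • e) + (y - ⟪e, y⟫ • e) := by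
          rw [inner_add_right]; module
        rw [this, h.orthPart_add he (horth x) (horth y), inner_add_right, map_add]
        module
      map_smul' := fun z x => by
        have : z • x - ⟪e, z • x⟫ • e = z • (x - ⟪e, x⟫ • e) := by
          rw [inner_smul_right]; module
        rw [this, hτ z _ (horth x), inner_smul_right, map_mul]
        module }
  have hU (α : ℂ) (w : H) (hw : ⟪e, w⟫ = 0) : U (α • e + w) = σ α • θ e + orthPart θ e w := by
    change σ ⟪e, α • e + w⟫ • θ e + orthPart θ e (α • e + w - ⟪e, α • e + w⟫ • e) = _
    rw [inner_add_right, inner_smul_right, hee, hw, mul_one, add_zero, add_sub_cancel_left]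
  refine ⟨⟨U, fun x => ?_⟩, hU⟩
  obtain ⟨α, w, rfl, hw⟩ := exists_smul_add_orth e x
  have h1 := norm_add_sq_eq_norm_sq_add_norm_sq_of_inner_eq_zero (σ α • θ e) (orthPart θ e w)
    (by rw [inner_smul_left, h.inner_orthPart he hw, mul_zero])
  have h2 := norm_add_sq_eq_norm_sq_add_norm_sq_of_inner_eq_zero (α • e) w
    (by rw [inner_smul_left, hw, mul_zero])
  rw [norm_smul, hσ, h.norm_eq, h.norm_orthPart he hw, ← norm_smul α e, ← h2, ← hU α w hw] at h1
  exact (mul_self_inj_of_nonneg (norm_nonneg _) (norm_nonneg _)).1 h1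

end ConstMap

namespace ConstMap

variable {φ : selfAdjoint (H →L[ℂ] H) → selfAdjoint (H →L[ℂ] H)} {θ : H → H} {c : ℝ}

theorem exists_smul_isometry (h : ConstMap φ θ c) {e : H} (he : ‖e‖ = 1) {σ : ℂ →+* ℂ}
    (hσ : ∀ z, ‖σ z‖ = ‖z‖) {U : H →ₛₗᵢ[σ] H}
    (hU : ∀ (α : ℂ) w, ⟪e, w⟫ = 0 → U (α • e + w) = σ α • θ e + orthPart θ e w) (x : H) :
    ∃ m : ℂ, ‖m‖ = 1 ∧ θ x = m • U x := by
  obtain ⟨α, w, rfl, hw⟩ := exists_smul_add_orth e x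
  by_cases hα : α = 0
  · by_cases hw0 : w = 0
    · exact ⟨1, norm_one, by rw [hα, hw0, zero_smul, add_zero, h.vec_zero, map_zero, smul_zero]⟩
    have hUw : U w = orthPart θ e w := by simpa using hU 0 w hw
    have h1 : ‖⟪U w, θ w⟫‖ = ‖U w‖ * ‖θ w‖ := by
      have h2 : ⟪θ e, θ w⟫ = 0 := h.orth hw
      have h3 : ⟪U w, θ w⟫ = ⟪θ e + orthPart θ e w, θ w⟫ := by
        rw [inner_add_left, h2, zero_add, hUw]
      rw [h3, add_orthPart, inner_smul_left, norm_mul, RCLike.norm_conj, h.norm_inner_base he hw,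
        one_mul, h.norm_inner, inner_add_left, hw, zero_add, U.norm_map, h.norm_eq,
        inner_self_eq_norm_sq_to_K]
      simp [sq]
    obtain ⟨m, -, hm⟩ := (norm_inner_eq_norm_iff (norm_ne_zero_iff.1
      (by rwa [U.norm_map, norm_ne_zero_iff])) (h.ne_zero hw0)).1 h1
    refine ⟨m, ?_, by rw [hα, zero_smul, zero_add, hm]⟩
    have h2 := congrArg norm hm
    rw [norm_smul, h.norm_eq, U.norm_map] at h2
    exact mul_right_cancel₀ (norm_ne_zero_iff.2 hw0) (h2.symm.trans (one_mul _).symm)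
  · obtain ⟨v, rfl⟩ : ∃ v, w = α • v := ⟨α⁻¹ • w, by rw [smul_inv_smul₀ hα]⟩
    have hv : ⟪e, v⟫ = 0 := by
      rw [inner_smul_right] at hw
      exact (mul_eq_zero.1 hw).resolve_left hα
    have hUv : U (e + v) = ⟪θ (e + v), θ e⟫ • θ (e + v) := by
      rw [← add_orthPart]
      simpa using hU 1 v hv
    have hp := h.norm_inner_base he hv
    set p := ⟪θ (e + v), θ e⟫
    have hp0 : p ≠ 0 := by rw [← norm_ne_zero_iff, hp]; exact one_ne_zero
    have hσα : σ α ≠ 0 := by rwa [← norm_ne_zero_iff, hσ, norm_ne_zero_iff]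
    obtain ⟨m, hm, hmx⟩ := h.exists_smul α (e + v)
    rw [← smul_add, hmx, map_smulₛₗ, hUv]
    refine ⟨m / (σ α * p), ?_, ?_⟩
    · rw [norm_div, norm_mul, hp, hσ, hm, mul_one, div_self (norm_ne_zero_iff.2 hα)]
    · rw [smul_smul, smul_smul, mul_assoc, div_mul_cancel₀ _ (mul_ne_zero hσα hp0)]

theorem congr (h : ConstMap φ θ c) {θ' : H → H} (hθ : ∀ x, ∃ m : ℂ, ‖m‖ = 1 ∧ θ x = m • θ' x) :
    ConstMap φ θ' c := by
  have hrk (x : H) : rk (θ x) = rk (θ' x) := by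
    obtain ⟨m, hm, hx⟩ := hθ x
    rw [hx, rk_smul, hm, one_pow, one_smul]
  exact
    { h with
      norm_eq := fun x => by
        obtain ⟨m, hm, hx⟩ := hθ x
        rw [← h.norm_eq x, hx, norm_smul, hm, one_mul]
      map_rk := fun x => by rw [← hrk]; exact h.map_rk x
      map_smul_rk := fun x t => by rw [← hrk]; exact h.map_smul_rk x t }

theorem exists_linear_or_conj (h : ConstMap φ θ c) :
    (∃ U : H →ₗᵢ[ℂ] H, ConstMap φ U c) ∨ ∃ U : H →ₗᵢ⋆[ℂ] H, ConstMap φ U c := by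
  obtain ⟨e, he, -⟩ := exists_orth_unit h.dim (0 : H) 0
  have hz (z : ℂ) (w : H) (hw : ⟪e, w⟫ = 0) : orthPart θ e (z • w) =
      (z.re : ℂ) • orthPart θ e w + (z.im : ℂ) • orthPart θ e (Complex.I • w) := by
    have hIw : ⟪e, Complex.I • w⟫ = 0 := by rw [inner_smul_right, hw, mul_zero]
    rw [← h.orthPart_smul he hw, ← h.orthPart_smul he hIw,
      ← h.orthPart_add he (by rw [inner_smul_right, hw, mul_zero])
        (by rw [inner_smul_right, hIw, mul_zero]), smul_smul, ← add_smul, Complex.re_add_im]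
  refine (h.orthPart_I_smul he).imp (fun hI => ?_) fun hI => ?_
  · obtain ⟨U, hU⟩ := h.exists_isometry he (σ := RingHom.id ℂ) (fun _ => rfl) fun z w hw => by
      rw [hz z w hw, hI w hw, smul_smul, ← add_smul, Complex.re_add_im, RingHom.id_apply]
    exact ⟨U, h.congr (h.exists_smul_isometry he (fun _ => rfl) hU)⟩
  · obtain ⟨U, hU⟩ := h.exists_isometry he (σ := starRingEnd ℂ) (fun z => RCLike.norm_conj z)
      fun z w hw => by
        rw [hz z w hw, hI w hw, smul_neg, smul_smul, ← sub_eq_add_neg, ← sub_smul]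
        congr 1
        apply Complex.ext <;> simp
    exact ⟨U, h.congr (h.exists_smul_isometry he (fun z => RCLike.norm_conj z) hU)⟩

end ConstMap

theorem CommQ.of_intertwine {U : H → H} (hU : Function.Injective U)
    {P Q A B : selfAdjoint (H →L[ℂ] H)}
    (hadd : ∀ x y, U (x + y) = U x + U y)
    (hP : ∀ x, (P : H →L[ℂ] H) (U x) = U ((A : H →L[ℂ] H) x))
    (hQ : ∀ x, (Q : H →L[ℂ] H) (U x) = U ((B : H →L[ℂ] H) x)) (h : CommQ P Q) : CommQ A B := by
  have h0 : U 0 = 0 := by simpa using hadd 0 0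
  refine h.imp (fun h => ContinuousLinearMap.ext fun x => hU ?_)
    fun h => ContinuousLinearMap.ext fun x => hU ?_
  · simpa [hP, hQ] using ContinuousLinearMap.ext_iff.1 h (U x)
  · simpa [hP, hQ, hadd, h0] using ContinuousLinearMap.ext_iff.1 h (U x)

/-- If `A` and `B` anticommute but do not commute, then so do `c • A + a • 1` and `c • B + b • 1`
only for `a = b = 0`. -/
theorem eq_zero_of_commQ_lin {A B : selfAdjoint (H →L[ℂ] H)} (hAB : ¬ CommC A B)
    (hanti : (A : H →L[ℂ] H) * (B : H →L[ℂ] H) + (B : H →L[ℂ] H) * (A : H →L[ℂ] H) = 0)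
    {c a b : ℝ} (hc : c ≠ 0) (h : CommQ (c • A + a • 1) (c • B + b • 1)) : a = 0 ∧ b = 0 := by
  rcases h with h | h
  · exact absurd ((commC_lin_iff hc).1 (commC_comm.1 ((commC_lin_iff hc).1 h))).symm hAB
  have hx (x : H) : (A : H →L[ℂ] H) ((B : H →L[ℂ] H) x) + (B : H →L[ℂ] H) ((A : H →L[ℂ] H) x) = 0 :=
    ContinuousLinearMap.ext_iff.1 hanti x
  have heq : (c * b) • A + (c * a) • B + (a * b) • 1 = 0 := by
    refine sa_ext fun x => ?_
    have h1 : ((c • A + a • 1 : selfAdjoint (H →L[ℂ] H)) : H →L[ℂ] H)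
          (((c • B + b • 1 : selfAdjoint (H →L[ℂ] H)) : H →L[ℂ] H) x) +
        ((c • B + b • 1 : selfAdjoint (H →L[ℂ] H)) : H →L[ℂ] H)
          (((c • A + a • 1 : selfAdjoint (H →L[ℂ] H)) : H →L[ℂ] H) x) = 0 :=
      ContinuousLinearMap.ext_iff.1 h x
    simp only [smul_val_apply, add_val_apply, one_val_apply, map_add, map_smul] at h1
    simp only [smul_val_apply, add_val_apply, one_val_apply, zero_val_apply]
    have h2 : (2 : ℂ) • (((c * b : ℝ) : ℂ) • (A : H →L[ℂ] H) x
        + ((c * a : ℝ) : ℂ) • (B : H →L[ℂ] H) x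
        + ((a * b : ℝ) : ℂ) • x) = 0 := by
      rw [← h1, ← sub_eq_zero]
      have h3 := congrArg (fun z => ((c : ℂ) * c) • z) (hx x)
      simp only [smul_add, smul_zero] at h3
      rw [← neg_eq_zero, ← h3]
      push_cast
      module
    exact (smul_eq_zero.1 h2).resolve_left two_ne_zero
  have ha : a = 0 := by
    by_contra ha
    have h1 : (c * a) • B + (a * b) • 1 = (-(c * b)) • A := by
      rw [neg_smul, eq_neg_iff_add_eq_zero, ← heq]
      abel
    exact hAB (((commC_lin_iff (mul_ne_zero hc ha)).1 (h1 ▸ CommC.smul_left _ rfl)).symm)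
  refine ⟨ha, by_contra fun hb => hAB ?_⟩
  rw [ha, mul_zero, zero_mul, zero_smul, zero_smul, add_zero, add_zero] at heq
  rw [← commC_smul_iff (mul_ne_zero hc hb), heq]
  exact (ScalarEq.refl 0).commC B

namespace ConstMap

variable {φ : selfAdjoint (H →L[ℂ] H) → selfAdjoint (H →L[ℂ] H)} {σ : ℂ →+* ℂ}
  {U : H →ₛₗᵢ[σ] H} {c : ℝ}

theorem exists_apply_eq (h : ConstMap φ U c) (hσ : ∀ t : ℝ, σ t = t)
    (A : selfAdjoint (H →L[ℂ] H)) (x : H) : ∃ m : ℝ,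
      (φ A : H →L[ℂ] H) (U x) = (c : ℂ) • U ((A : H →L[ℂ] H) x) + (m : ℂ) • U x := by
  by_cases hx : x = 0
  · exact ⟨0, by simp [hx]⟩
  have hx2 : (‖x‖ : ℂ) ^ 2 ≠ 0 := pow_ne_zero _ (by exact_mod_cast norm_ne_zero_iff.2 hx)
  obtain ⟨l, u, hA, hu⟩ := exists_smul_add_orth x ((A : H →L[ℂ] H) x)
  have hrk (x u : H) (hu : ⟪x, u⟫ = 0) (hx2 : (‖x‖ : ℂ) ^ 2 ≠ 0) (s : ℂ) :
      (s * (‖x‖ ^ 2 : ℂ)⁻¹) • (rk (x + u) : H →L[ℂ] H) x = s • (x + u) := by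
    rw [rk_apply, inner_add_left, inner_eq_zero_symm.1 hu, add_zero, inner_self_eq_norm_sq_to_K,
      smul_smul]
    congr 1
    exact inv_mul_cancel_right₀ hx2 s
  have hE : Eig (A - ((‖x‖ ^ 2)⁻¹ : ℝ) • rk (x + u)) x := by
    refine ⟨l - 1, ?_⟩
    have := hrk x u hu hx2 1
    rw [one_mul, one_smul] at this
    rw [sub_val_apply, smul_val_apply, hA]
    push_cast
    rw [this]
    module
  obtain ⟨r, hr⟩ := hE.real
  obtain ⟨s, hs⟩ := (h.eig_sub.1 hE).real
  obtain ⟨k, hk⟩ := cls_eq.1 ((h.map_smul_rk (x + u) (‖x‖ ^ 2)⁻¹).trans (map_smul _ _ _).symm)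
  have hAx : (A : H →L[ℂ] H) x = ((r + 1 : ℝ) : ℂ) • x + u := by
    have := hrk x u hu hx2 1
    rw [one_mul, one_smul] at this
    rw [sub_val_apply, smul_val_apply, sub_eq_iff_eq_add] at hr
    push_cast at hr
    rw [this] at hr
    rw [hr]
    push_cast
    module
  refine ⟨s + k - c * r, ?_⟩
  have := hrk (U x) (U u) (h.orth hu) (by rwa [U.norm_map]) c
  rw [sub_val_apply, hk, sub_eq_iff_eq_add, add_val_apply, smul_val_apply, smul_val_apply,
    one_val_apply, map_add] at hs
  push_cast at hs
  rw [U.norm_map] at this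
  rw [this] at hs
  rw [hs, hAx, map_add, map_smulₛₗ, hσ]
  push_cast
  module

theorem exists_apply_eq_uniform (h : ConstMap φ U c) (hσ : ∀ t : ℝ, σ t = t)
    (A : selfAdjoint (H →L[ℂ] H)) : ∃ m : ℝ, ∀ x,
      (φ A : H →L[ℂ] H) (U x) = (c : ℂ) • U ((A : H →L[ℂ] H) x) + (m : ℂ) • U x := by
  obtain ⟨e, he, -⟩ := exists_orth_unit h.dim (0 : H) 0
  have he0 : e ≠ 0 := norm_ne_zero_iff.1 (by rw [he]; exact one_ne_zero)
  obtain ⟨m, hm⟩ := h.exists_apply_eq hσ A e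
  have hmul (z : ℂ) {x : H}
      (hx : (φ A : H →L[ℂ] H) (U x) = (c : ℂ) • U ((A : H →L[ℂ] H) x) + (m : ℂ) • U x) :
      (φ A : H →L[ℂ] H) (U (z • x)) =
        (c : ℂ) • U ((A : H →L[ℂ] H) (z • x)) + (m : ℂ) • U (z • x) := by
    simp only [map_smul, map_smulₛₗ, hx]
    module
  have horth {w : H} (hw : ⟪e, w⟫ = 0) :
      (φ A : H →L[ℂ] H) (U w) = (c : ℂ) • U ((A : H →L[ℂ] H) w) + (m : ℂ) • U w := by
    by_cases hw0 : w = 0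
    · simp [hw0]
    obtain ⟨p, hp⟩ := h.exists_apply_eq hσ A w
    obtain ⟨q, hq⟩ := h.exists_apply_eq hσ A (e + w)
    have h1 : ((q : ℂ) - m) • U e + ((q : ℂ) - p) • U w = 0 := by
      simp only [map_add, hp, hm] at hq
      rw [← sub_eq_zero] at hq
      rw [← neg_eq_zero, ← hq]
      module
    have h2 := congrArg (inner ℂ (U e)) h1
    have h3 := congrArg (inner ℂ (U w)) h1
    rw [inner_add_right, inner_smul_right, inner_smul_right, h.orth hw, inner_zero_right, mul_zero,
      add_zero, mul_eq_zero, or_iff_left (inner_self_ne_zero.2 (h.ne_zero he0)), sub_eq_zero] at h2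
    rw [inner_add_right, inner_smul_right, inner_smul_right, h.orth (inner_eq_zero_symm.1 hw),
      inner_zero_right, mul_zero, zero_add, mul_eq_zero,
      or_iff_left (inner_self_ne_zero.2 (h.ne_zero hw0)), sub_eq_zero] at h3
    rw [hp, ← h3, h2]
  refine ⟨m, fun x => ?_⟩
  obtain ⟨α, w, rfl, hw⟩ := exists_smul_add_orth e x
  simp only [map_add, hmul α hm, horth hw, smul_add]
  abel

theorem surjective [RingHomInvPair σ σ] (h : ConstMap φ U c) (hσ : ∀ t : ℝ, σ t = t) :
    Function.Surjective U := by
  intro y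
  obtain ⟨e, he, -⟩ := exists_orth_unit h.dim (0 : H) 0
  obtain ⟨α, w, rfl, hw⟩ := exists_smul_add_orth (U e) y
  obtain ⟨A, hA⟩ := h.surj (rk (U e + w) - rk (U e) - rk w)
  obtain ⟨m, hm⟩ := h.exists_apply_eq_uniform hσ A
  have hUe : ⟪U e, U e⟫ = 1 := by rw [inner_self_eq_norm_sq_to_K, h.norm_eq, he]; simp
  have hw' : (φ A : H →L[ℂ] H) (U e) = w := by
    rw [hA, sub_val_apply, sub_val_apply, rk_orth (inner_eq_zero_symm.1 hw), rk_apply, rk_apply,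
      inner_add_left, inner_eq_zero_symm.1 hw, hUe]
    module
  refine ⟨σ α • e + (c : ℂ) • (A : H →L[ℂ] H) e + (m : ℂ) • e, ?_⟩
  rw [← hw', hm, map_add, map_add, map_smulₛₗ, map_smulₛₗ, map_smulₛₗ, hσ, hσ,
    RingHomInvPair.comp_apply_eq, add_assoc]

theorem eq_zero_of_anticomm (h : ConstMap φ U c) (hσ : ∀ t : ℝ, σ t = t)
    {f : selfAdjoint (H →L[ℂ] H) → ℝ}
    (hf : ∀ A x, (φ A : H →L[ℂ] H) (U x) = (c : ℂ) • U ((A : H →L[ℂ] H) x) + (f A : ℂ) • U x)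
    {A B : selfAdjoint (H →L[ℂ] H)} (hAB : ¬ CommC A B)
    (hanti : (A : H →L[ℂ] H) * (B : H →L[ℂ] H) + (B : H →L[ℂ] H) * (A : H →L[ℂ] H) = 0) :
    f A = f 0 ∧ f B = 0 := by
  have hQ : CommQ (c • A + (f A - f 0) • 1) (c • B + f B • 1) := by
    refine CommQ.of_intertwine U.injective (P := φ A - φ 0) (Q := φ B) (map_add U) (fun x => ?_)
      (fun x => ?_) ((h.commQ A 0 B).1 (Or.inr (by rwa [sub_zero])))
    · rw [sub_val_apply, hf, hf, add_val_apply, smul_val_apply, smul_val_apply, one_val_apply,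
        map_add, map_smulₛₗ, map_smulₛₗ, hσ, hσ, zero_val_apply, map_zero]
      push_cast
      module
    · rw [hf, add_val_apply, smul_val_apply, smul_val_apply, one_val_apply, map_add, map_smulₛₗ,
        map_smulₛₗ, hσ, hσ]
  obtain ⟨h1, h2⟩ := eq_zero_of_commQ_lin hAB hanti h.ne hQ
  exact ⟨sub_eq_zero.1 h1, h2⟩

theorem exists_form [RingHomInvPair σ σ] (h : ConstMap φ U c) (hσ : ∀ t : ℝ, σ t = t) :
    ∃ (V : H ≃ₛₗᵢ[σ] H) (f : selfAdjoint (H →L[ℂ] H) → ℝ),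
      (∀ (A : selfAdjoint (H →L[ℂ] H)) (x : H), (φ A : H →L[ℂ] H) x =
        (c : ℂ) • V ((A : H →L[ℂ] H) (V.symm x)) + (f A : ℂ) • x) ∧
      ∀ A : selfAdjoint (H →L[ℂ] H),
        (∃ B : selfAdjoint (H →L[ℂ] H), B ≠ 0 ∧ ¬ CommC A B ∧
          (A : H →L[ℂ] H) * (B : H →L[ℂ] H) + (B : H →L[ℂ] H) * (A : H →L[ℂ] H) = 0) →
        f A = 0 := by
  choose f hf using h.exists_apply_eq_uniform hσ
  refine ⟨LinearIsometryEquiv.ofSurjective U (h.surjective hσ), f, fun A x => ?_, ?_⟩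
  · obtain ⟨y, rfl⟩ := h.surjective hσ x
    have : (LinearIsometryEquiv.ofSurjective U (h.surjective hσ)).symm (U y) = y :=
      (LinearIsometryEquiv.ofSurjective U (h.surjective hσ)).symm_apply_apply y
    rw [this]
    exact hf A y
  · rintro A ⟨B, -, hAB, hanti⟩
    have hanti' := (add_comm _ _).trans hanti
    rw [(h.eq_zero_of_anticomm hσ hf hAB hanti).1,
      ← (h.eq_zero_of_anticomm hσ hf (fun H => hAB H.symm) hanti').1,
      (h.eq_zero_of_anticomm hσ hf hAB hanti).2]

end ConstMap

theorem stmt2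
    (hdim : 3 ≤ Module.rank ℂ H)
    (φ : selfAdjoint (H →L[ℂ] H) → selfAdjoint (H →L[ℂ] H))
    (hsurj : Function.Surjective φ)
    (hpres : ∀ A B C : selfAdjoint (H →L[ℂ] H),
      CommQ (A - B) C ↔ CommQ (φ A - φ B) (φ C)) :
    ∃ c : ℝ, c ≠ 0 ∧ ∃ f : selfAdjoint (H →L[ℂ] H) → ℝ,
      ((∃ U : H ≃ₗᵢ[ℂ] H, ∀ (A : selfAdjoint (H →L[ℂ] H)) (x : H),
          (φ A : H →L[ℂ] H) x = (c : ℂ) • U ((A : H →L[ℂ] H) (U.symm x)) + (f A : ℂ) • x) ∨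
       (∃ U : H ≃ₗᵢ⋆[ℂ] H, ∀ (A : selfAdjoint (H →L[ℂ] H)) (x : H),
          (φ A : H →L[ℂ] H) x = (c : ℂ) • U ((A : H →L[ℂ] H) (U.symm x)) + (f A : ℂ) • x)) ∧
      (∀ A : selfAdjoint (H →L[ℂ] H),
        (∃ B : selfAdjoint (H →L[ℂ] H), B ≠ 0 ∧ ¬ CommC A B ∧
          (A : H →L[ℂ] H) * (B : H →L[ℂ] H) + (B : H →L[ℂ] H) * (A : H →L[ℂ] H) = 0) →
        f A = 0) := by
  have h : QPres φ := ⟨hsurj, hpres⟩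
  choose θ hθ hmap using h.exists_rk hdim
  have hv : VecMap φ θ := ⟨h, hdim, hθ, hmap⟩
  obtain ⟨c, hc, hcmap⟩ := hv.exists_const
  refine ⟨c, hc, ?_⟩
  rcases ConstMap.exists_linear_or_conj ⟨hv, hc, hcmap⟩ with ⟨U, hU⟩ | ⟨U, hU⟩
  · obtain ⟨V, f, h1, h2⟩ := hU.exists_form fun _ => rfl
    exact ⟨f, Or.inl ⟨V, h1⟩, h2⟩
  · obtain ⟨V, f, h1, h2⟩ := hU.exists_form Complex.conj_ofReal
    exact ⟨f, Or.inr ⟨V, h1⟩, h2⟩
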